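/- arXiv:math/0211215 — 4 statements merged into one kernel-verified Lean document; each statement's English description precedes it below -/
import Mathlib

section
/- For every compact metrizable space X there exists a continuous regular linear extension operator u : PM → PM(X); that is, a map u assigning to each continuous pseudometric ρ defined on a nonempty closed subset dom ρ of X a continuous pseudometric u(ρ) on all of X, such that: (i) u(ρ) restricted to dom ρ × dom ρ equals ρ; (ii) u(cρ) = c·u(ρ) for every c ≥ 0 and u(ρ + λ) = u(ρ) + u(λ) whenever dom ρ = dom λ; (iii) sup_{x,y ∈ X} u(ρ)(x,y) = sup_{x,y ∈ dom ρ} ρ(x,y); and (iv) u is continuous with respect to the topology on PM induced from exp(X × X × ℝ) by identifying pseudometrics with their graphs. -/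
/- STATEMENT 6: For every compact metrizable space X there exists a continuous
   regular linear extension operator u : PM → PM(X): (i) u(ρ) extends ρ;
   (ii) u(cρ) = c·u(ρ) for c ≥ 0 and u(ρ+λ) = u(ρ)+u(λ) when dom ρ = dom λ;
   (iii) sup u(ρ) = sup ρ; (iv) u is continuous for the topology on PM induced
   from exp(X × X × ℝ) (Vietoris) by identifying pseudometrics with graphs. -/
open TopologicalSpace Set

noncomputable section

/-- The Vietoris topology on subsets of a topological space, generated by the
sets `{K | K ⊆ U}` and `{K | (K ∩ U).Nonempty}` for `U` open. -/
def vietoris (Y : Type*) [TopologicalSpace Y] : TopologicalSpace (Set Y) :=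
  TopologicalSpace.generateFrom
    {S | ∃ U : Set Y, IsOpen U ∧ (S = {K | K ⊆ U} ∨ S = {K : Set Y | (K ∩ U).Nonempty})}

/-- A partial continuous pseudometric on the space `X`: a continuous
pseudometric whose domain is a nonempty closed subset of `X`.  (Only the
values of `d` on `dom × dom` are relevant.) -/
structure PartialCPM (X : Type*) [TopologicalSpace X] where
  dom : Set X
  dom_ne : dom.Nonempty
  dom_closed : IsClosed dom
  d : X → X → ℝ
  refl : ∀ x ∈ dom, d x x = 0
  symm : ∀ x ∈ dom, ∀ y ∈ dom, d x y = d y x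
  triangle : ∀ x ∈ dom, ∀ y ∈ dom, ∀ z ∈ dom, d x z ≤ d x y + d y z
  cont : ContinuousOn (fun p : X × X => d p.1 p.2) (dom ×ˢ dom)

/-- A continuous pseudometric on (all of) the space `X`. -/
structure CPM (X : Type*) [TopologicalSpace X] where
  d : X → X → ℝ
  refl : ∀ x, d x x = 0
  symm : ∀ x y, d x y = d y x
  triangle : ∀ x y z, d x z ≤ d x y + d y z
  cont : Continuous fun p : X × X => d p.1 p.2

variable {X : Type*} [TopologicalSpace X]

/-- The graph of a partial pseudometric, a subset of `X × X × ℝ`. -/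
def PartialCPM.graph (ρ : PartialCPM X) : Set (X × X × ℝ) :=
  {p | p.1 ∈ ρ.dom ∧ p.2.1 ∈ ρ.dom ∧ p.2.2 = ρ.d p.1 p.2.1}

/-- PM is topologized via graphs in `exp (X × X × ℝ)` (Vietoris topology). -/
instance : TopologicalSpace (PartialCPM X) :=
  TopologicalSpace.induced PartialCPM.graph (vietoris (X × X × ℝ))

/-- The graph of a continuous pseudometric on `X`. -/
def CPM.graph (ρ : CPM X) : Set (X × X × ℝ) :=
  {p | p.2.2 = ρ.d p.1 p.2.1}

/-- PM(X) is topologized via graphs in `exp (X × X × ℝ)` (Vietoris topology). -/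
instance : TopologicalSpace (CPM X) :=
  TopologicalSpace.induced CPM.graph (vietoris (X × X × ℝ))

/-!
For `t` in the Hilbert cube and a dense sequence `z`, send `x` to a point `r_t x` of `dom ρ`
minimizing `dist x a * (1 + ∑ t_k 2⁻ᵏ dist a z_k)`, and let `u(ρ)(x, y)` be the mean of
`ρ(r_t x, r_t y)` over uniform `t`. The properties of `u` other than continuity are inherited from
`r_t`, which fixes `dom ρ` pointwise.

For continuity it suffices that for almost every `t` the minimizer is unique, since then `r_t x` is
continuous in `(t, dom ρ, x)` at that point. The objective is affine in each coordinate `t_k`, so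
the slope at its minimizers decreases along a coordinate line, and on each such line at most one
value of `t_k` admits two minimizers with slopes on different sides of a given rational gap. By
Fubini, almost surely all minimizers share the slopes `dist x a * 2⁻ᵏ dist a z_k` for every `k`;
as `z` is dense, these determine `a` when `x ∉ dom ρ`, while for `x ∈ dom ρ` the minimizer is `x`.
-/

open MeasureTheory Filter Topology

/-! ### Limits in the Vietoris topology -/

theorem vietoris_eq_topologicalSpaceVietoris (Z : Type*) [TopologicalSpace Z] :
    vietoris Z = TopologicalSpace.vietoris Z := by
  unfold vietoris TopologicalSpace.vietoris
  congr 1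
  ext S
  simp only [mem_ofPred_eq, mem_union, mem_image, and_or_left, exists_or, powerset, eq_comm]

section Limits

variable {Z ι : Type*} [TopologicalSpace Z] {l : Filter ι}

theorem exists_ultrafilter_le_nhds_of_le_nhdsSet {K : Set Z} (hK : IsCompact K)
    (g : Ultrafilter Z) (hg : ↑g ≤ 𝓝ˢ K) : ∃ z ∈ K, ↑g ≤ 𝓝 z := by
  by_contra! h
  have hdisj : Disjoint (𝓝ˢ K) g :=
    hK.disjoint_nhdsSet_left.2 fun z hz => (Ultrafilter.disjoint_iff_not_le.2 (h z hz)).symm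
  exact g.neBot.ne (disjoint_self.1 (hdisj.mono_left hg))

theorem tendsto_nhdsSet_of_mem_nonemptyCompacts {K : ι → NonemptyCompacts Z}
    {K₀ : NonemptyCompacts Z} (hK : Tendsto K l (𝓝 K₀)) {z : ι → Z} (hz : ∀ i, z i ∈ K i) :
    Tendsto z l (𝓝ˢ K₀) := by
  intro S hS
  obtain ⟨U, hU, hKU, hUS⟩ := mem_nhdsSet_iff_exists.1 hS
  exact (hK.eventually ((NonemptyCompacts.isOpen_subsets_of_isOpen hU).mem_nhds hKU)).mono
    fun i hi => hUS (hi (hz i))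

theorem tendsto_nhds_of_forall_ultrafilter {K : ι → NonemptyCompacts Z}
    {K₀ : NonemptyCompacts Z} (hK : Tendsto K l (𝓝 K₀)) {z : ι → Z} (hz : ∀ i, z i ∈ K i)
    {z₀ : Z} (h : ∀ g : Ultrafilter ι, ↑g ≤ l → ∀ y ∈ K₀, Tendsto z g (𝓝 y) → y = z₀) :
    Tendsto z l (𝓝 z₀) := by
  refine (tendsto_iff_ultrafilter z l (𝓝 z₀)).2 fun g hg => ?_
  have hzg : Tendsto z g (𝓝ˢ K₀) := (tendsto_nhdsSet_of_mem_nonemptyCompacts hK hz).mono_left hg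
  obtain ⟨y, hyK, hy⟩ := exists_ultrafilter_le_nhds_of_le_nhdsSet K₀.isCompact (g.map z) hzg
  exact h g hg y hyK hy ▸ hy

variable {R : Type*} [TopologicalSpace R] [LinearOrder R] [OrderClosedTopology R]
  {K : ι → NonemptyCompacts Z} {K₀ : NonemptyCompacts Z} {f : ι → Z → R} {f₀ : Z → R}
  {z : ι → Z} {z₀ : Z}

theorem isMinOn_of_tendsto [l.NeBot] (hK : Tendsto K l (𝓝 K₀))
    (hf : ∀ a, Tendsto ↿f (l ×ˢ 𝓝 a) (𝓝 (f₀ a))) (hmin : ∀ i, IsMinOn (f i) (K i) (z i))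
    (hz : Tendsto z l (𝓝 z₀)) : IsMinOn f₀ K₀ z₀ := by
  intro a ha
  by_contra hlt
  have hfz : Tendsto (fun i => f i (z i)) l (𝓝 (f₀ z₀)) :=
    (hf z₀).comp (tendsto_id.prodMk hz)
  have hev : ∀ᶠ q : ι × Z in l ×ˢ 𝓝 a, f q.1 q.2 < f q.1 (z q.1) :=
    (hf a).eventually_lt (hfz.comp tendsto_fst) (lt_of_not_ge hlt)
  obtain ⟨p, hp, q, hq, hpq⟩ := eventually_prod_iff.1 hev
  obtain ⟨U, hUq, hU, haU⟩ := mem_nhds_iff.1 hq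
  have hmeet : ∀ᶠ i in l, (↑(K i) ∩ U).Nonempty :=
    hK.eventually ((NonemptyCompacts.isOpen_inter_nonempty_of_isOpen hU).mem_nhds ⟨a, ha, haU⟩)
  obtain ⟨i, hpi, b, hbK, hbU⟩ := (hp.and hmeet).exists
  exact (hpq hpi (hUq hbU)).not_ge (hmin i hbK)

theorem tendsto_of_isMinOn (hK : Tendsto K l (𝓝 K₀))
    (hf : ∀ a, Tendsto ↿f (l ×ˢ 𝓝 a) (𝓝 (f₀ a))) (hz : ∀ i, z i ∈ K i)
    (hmin : ∀ i, IsMinOn (f i) (K i) (z i)) (huniq : ∀ a ∈ K₀, IsMinOn f₀ K₀ a → a = z₀) :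
    Tendsto z l (𝓝 z₀) := by
  refine tendsto_nhds_of_forall_ultrafilter hK hz fun g hg y hyK hy => huniq y hyK ?_
  exact isMinOn_of_tendsto (hK.mono_left hg)
    (fun a => (hf a).mono_left (prod_mono_left _ hg)) hmin hy

end Limits

/-! ### Spaces of pseudometrics -/

namespace PartialCPM

theorem mk_mem_graph (ρ : PartialCPM X) {a b : X} (ha : a ∈ ρ.dom) (hb : b ∈ ρ.dom) :
    (a, b, ρ.d a b) ∈ ρ.graph :=
  ⟨ha, hb, rfl⟩

variable [CompactSpace X]

/-- The domain of a partial pseudometric, as a point of the hyperspace of `X`. -/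
def compactDom (ρ : PartialCPM X) : NonemptyCompacts X where
  carrier := ρ.dom
  isCompact' := ρ.dom_closed.isCompact
  nonempty' := ρ.dom_ne

theorem compactDom_congr {ρ σ : PartialCPM X} (h : σ.dom = ρ.dom) :
    σ.compactDom = ρ.compactDom :=
  NonemptyCompacts.ext h

theorem isCompact_graph (ρ : PartialCPM X) : IsCompact ρ.graph := by
  have himage : ρ.graph = (fun p : X × X => (p.1, p.2, ρ.d p.1 p.2)) '' (ρ.dom ×ˢ ρ.dom) := by
    ext ⟨a, b, s⟩
    simp only [graph, mem_ofPred_eq, mem_image, mem_prod, Prod.mk.injEq, Prod.exists]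
    grind
  rw [himage]
  exact (ρ.dom_closed.isCompact.prod ρ.dom_closed.isCompact).image_of_continuousOn
    (continuousOn_fst.prodMk (continuousOn_snd.prodMk ρ.cont))

/-- The graph of a partial pseudometric, as a point of the hyperspace of `X × X × ℝ`. -/
def compactGraph (ρ : PartialCPM X) : NonemptyCompacts (X × X × ℝ) where
  carrier := ρ.graph
  isCompact' := ρ.isCompact_graph
  nonempty' := let ⟨_, ha⟩ := ρ.dom_ne; ⟨_, ρ.mk_mem_graph ha ha⟩

theorem isInducing_compactGraph :
    IsInducing (compactGraph : PartialCPM X → NonemptyCompacts (X × X × ℝ)) where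
  eq_induced := by
    change TopologicalSpace.induced graph (vietoris _) =
      TopologicalSpace.induced compactGraph (TopologicalSpace.induced _ (.vietoris _))
    rw [induced_compose, vietoris_eq_topologicalSpaceVietoris]
    rfl

instance [SecondCountableTopology X] : SecondCountableTopology (PartialCPM X) :=
  isInducing_compactGraph.secondCountableTopology

theorem continuous_compactDom :
    Continuous (compactDom : PartialCPM X → NonemptyCompacts X) := by
  have hmap : (compactDom : PartialCPM X → NonemptyCompacts X) =
      NonemptyCompacts.map Prod.fst continuous_fst ∘ compactGraph := by
    ext ρ a
    change a ∈ ρ.dom ↔ a ∈ Prod.fst '' ρ.graph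
    exact ⟨fun ha => ⟨_, ρ.mk_mem_graph ha ha, rfl⟩, fun ⟨_, hp, hpa⟩ => hpa ▸ hp.1⟩
  rw [hmap]
  exact continuous_fst.nonemptyCompacts_map.comp isInducing_compactGraph.continuous

theorem eventually_norm_d_le (ρ₀ : PartialCPM X) :
    ∃ M, ∀ᶠ ρ in 𝓝 ρ₀, ∀ a ∈ ρ.dom, ∀ b ∈ ρ.dom, ‖ρ.d a b‖ ≤ M := by
  obtain ⟨M, hM⟩ := ρ₀.isCompact_graph.exists_bound_of_continuousOn
    (f := fun p : X × X × ℝ => p.2.2) (by fun_prop)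
  have hopen : IsOpen {p : X × X × ℝ | ‖p.2.2‖ < M + 1} :=
    isOpen_lt (by fun_prop) continuous_const
  have hsub : ρ₀.graph ⊆ {p | ‖p.2.2‖ < M + 1} := fun p hp => (hM p hp).trans_lt (lt_add_one M)
  refine ⟨M + 1, (isInducing_compactGraph.continuous.continuousAt.eventually
    ((NonemptyCompacts.isOpen_subsets_of_isOpen hopen).mem_nhds hsub)).mono
      fun ρ hρ a ha b hb => ?_⟩
  exact (hρ (ρ.mk_mem_graph ha hb)).le

theorem tendsto_d [T2Space X] {ι : Type*} {l : Filter ι} {ρ : ι → PartialCPM X}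
    {ρ₀ : PartialCPM X} (hρ : Tendsto ρ l (𝓝 ρ₀)) {a b : ι → X} {a₀ b₀ : X}
    (ha : Tendsto a l (𝓝 a₀)) (hb : Tendsto b l (𝓝 b₀)) (ha_mem : ∀ i, a i ∈ (ρ i).dom)
    (hb_mem : ∀ i, b i ∈ (ρ i).dom) :
    Tendsto (fun i => (ρ i).d (a i) (b i)) l (𝓝 (ρ₀.d a₀ b₀)) := by
  suffices h : Tendsto (fun i => (a i, b i, (ρ i).d (a i) (b i))) l (𝓝 (a₀, b₀, ρ₀.d a₀ b₀)) from
    h.snd_nhds.snd_nhds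
  have hgraph := isInducing_compactGraph.continuous.continuousAt.tendsto.comp hρ
  refine tendsto_nhds_of_forall_ultrafilter hgraph
    (fun i => (ρ i).mk_mem_graph (ha_mem i) (hb_mem i)) ?_
  rintro g hg ⟨a', b', s⟩ ⟨-, -, hs⟩ hlim
  obtain rfl : a' = a₀ := tendsto_nhds_unique hlim.fst_nhds (ha.mono_left hg)
  obtain rfl : b' = b₀ := tendsto_nhds_unique hlim.snd_nhds.fst_nhds (hb.mono_left hg)
  exact congrArg (fun r => (a', b', r)) hs

end PartialCPM

theorem CPM.continuous_of_continuous_d [CompactSpace X] {P : Type*} [TopologicalSpace P]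
    {u : P → CPM X} (hu : Continuous fun q : P × X × X => (u q.1).d q.2.1 q.2.2) :
    Continuous u := by
  have hgraph (p : P) : Continuous fun z : X × X => (z.1, z.2, (u p).d z.1 z.2) :=
    continuous_fst.prodMk (continuous_snd.prodMk (u p).cont)
  have himage (p : P) : (u p).graph = Compacts.map _ (hgraph p) ⊤ := by
    ext ⟨a, b, s⟩
    simp only [CPM.graph, mem_ofPred_eq, Compacts.coe_map, Compacts.coe_top, image_univ, mem_range,
      Prod.mk.injEq, Prod.exists]
    grind
  refine continuous_induced_rng.2 ?_
  rw [vietoris_eq_topologicalSpaceVietoris]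
  simp only [Function.comp_def, himage]
  refine @Continuous.comp _ _ _ _ _ (_) _ _ Compacts.continuous_coe ?_
  exact continuous_const.compacts_map' (by fun_prop)

/-! ### Null sets in product spaces -/

section Product

variable {ι : Type*} [DecidableEq ι] {Ω : ι → Type*} [∀ i, MeasurableSpace (Ω i)]
  (μ : ∀ i, Measure (Ω i)) [∀ i, IsProbabilityMeasure (μ i)]

theorem measurePreserving_update_infinitePi (k : ι) :
    MeasurePreserving (fun p : (∀ i, Ω i) × Ω k => Function.update p.1 k p.2)
      ((Measure.infinitePi μ).prod (μ k)) (Measure.infinitePi μ) where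
  measurable := measurable_update'
  map_eq := by
    refine Measure.eq_infinitePi μ fun s B hB => ?_
    have hpreimage :
        (fun p : (∀ i, Ω i) × Ω k => Function.update p.1 k p.2) ⁻¹' (s : Set ι).pi B =
          ((s.erase k : Finset ι) : Set ι).pi B ×ˢ {a | k ∈ s → a ∈ B k} := by
      ext ⟨t, a⟩
      simp only [mem_preimage, Set.mem_pi, mem_prod, mem_ofPred_eq, SetLike.mem_coe,
        Finset.mem_erase]
      grind
    rw [Measure.map_apply measurable_update' (.pi s.countable_toSet fun i _ => hB i), hpreimage,
      Measure.prod_prod, Measure.infinitePi_pi _ fun i _ => hB i]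
    by_cases hk : k ∈ s
    · simp [hk, Finset.prod_erase_mul s (fun i => μ i (B i)) hk]
    · simp [hk]

theorem infinitePi_eq_zero_of_countable_slices (k : ι) [NullSingletonClass (μ k)]
    {N : Set (∀ i, Ω i)} (hN : MeasurableSet N)
    (hslice : ∀ t, {a | Function.update t k a ∈ N}.Countable) :
    Measure.infinitePi μ N = 0 := by
  have hupdate := measurePreserving_update_infinitePi μ k
  rw [← hupdate.measure_preimage hN.nullMeasurableSet,
    Measure.measure_prod_null (hupdate.measurable hN)]
  exact .of_forall fun t => (hslice t).measure_zero (μ k)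

end Product

/-! ### Minimizers of randomly perturbed functions -/

theorem slope_le_of_isMinOn {Y : Type*} {S : Set Y} {f g v : Y → ℝ} {r : ℝ} (hr : 0 < r)
    (hg : ∀ c, g c = f c + r * v c) {a b : Y} (ha : a ∈ S) (hb : b ∈ S)
    (hfa : IsMinOn f S a) (hgb : IsMinOn g S b) : v b ≤ v a := by
  have hab : f a ≤ f b := hfa hb
  have hba : g b ≤ g a := hgb ha
  rw [hg, hg] at hba
  nlinarith

section GenericMinimizers

variable {ι Y : Type*} [TopologicalSpace Y] [CompactSpace Y]

theorem isClosed_setOf_exists_isMinOn_slope {T : Type*} [TopologicalSpace T] {Φ : T → Y → ℝ}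
    (hΦ : Continuous ↿Φ) {v : Y → ℝ} (hv : Continuous v) (p q : ℝ) :
    IsClosed {t | ∃ a b, IsMinOn (Φ t) univ a ∧ IsMinOn (Φ t) univ b ∧ v a ≤ p ∧ q ≤ v b} := by
  have hmin : IsClosed {z : T × Y | IsMinOn (Φ z.1) univ z.2} := by
    simp only [isMinOn_iff, mem_univ, true_imp_iff, Set.ofPred_forall]
    exact isClosed_iInter fun c => isClosed_le hΦ
      (hΦ.comp (continuous_fst.prodMk continuous_const))
  have hpairs : IsClosed {z : T × Y × Y | IsMinOn (Φ z.1) univ z.2.1 ∧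
      IsMinOn (Φ z.1) univ z.2.2 ∧ v z.2.1 ≤ p ∧ q ≤ v z.2.2} :=
    (hmin.preimage (f := fun z : T × Y × Y => (z.1, z.2.1)) (by fun_prop)).inter <|
      (hmin.preimage (f := fun z : T × Y × Y => (z.1, z.2.2)) (by fun_prop)).inter <|
      (isClosed_le (hv.comp continuous_snd.fst) continuous_const).inter <|
      isClosed_le continuous_const (hv.comp continuous_snd.snd)
  convert isClosedMap_fst_of_compactSpace _ hpairs using 1
  ext t
  simp

variable [Countable ι] [DecidableEq ι] {Φ : (ι → unitInterval) → Y → ℝ} {k : ι} {v : Y → ℝ}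

theorem ae_slope_eq_of_isMinOn (hΦ : Continuous ↿Φ) (hv : Continuous v)
    (hupdate : ∀ t s a, Φ (Function.update t k s) a = Φ t a + (s - t k) * v a) :
    ∀ᵐ t ∂Measure.infinitePi fun _ : ι => (volume : Measure unitInterval),
      ∀ a b, IsMinOn (Φ t) univ a → IsMinOn (Φ t) univ b → v a = v b := by
  have hmono (t : ι → unitInterval) {s s' : unitInterval} (hs : s < s') {a b : Y}
      (ha : IsMinOn (Φ (Function.update t k s)) univ a)
      (hb : IsMinOn (Φ (Function.update t k s')) univ b) : v b ≤ v a := by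
    refine slope_le_of_isMinOn (sub_pos.2 (Subtype.coe_lt_coe.2 hs)) (fun c => ?_)
      (mem_univ a) (mem_univ b) ha hb
    rw [hupdate, hupdate]
    ring
  let bad (p q : ℝ) : Set (ι → unitInterval) :=
    {t | ∃ a b, IsMinOn (Φ t) univ a ∧ IsMinOn (Φ t) univ b ∧ v a ≤ p ∧ q ≤ v b}
  have hbad (p q : ℚ) (hpq : p < q) :
      Measure.infinitePi (fun _ : ι => (volume : Measure unitInterval)) (bad p q) = 0 := by
    have hpq' : (p : ℝ) < q := by exact_mod_cast hpq
    refine infinitePi_eq_zero_of_countable_slices _ k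
      (isClosed_setOf_exists_isMinOn_slope hΦ hv p q).measurableSet fun t => ?_
    have hlt_irrefl (s s' : unitInterval) (hs : s < s') (hmem : Function.update t k s ∈ bad p q)
        (hmem' : Function.update t k s' ∈ bad p q) : False := by
      obtain ⟨a, -, ha, -, hap, -⟩ := hmem
      obtain ⟨-, b, -, hb, -, hqb⟩ := hmem'
      linarith [hmono t hs ha hb]
    refine Subsingleton.countable fun s hs s' hs' => ?_
    exact le_antisymm (le_of_not_gt fun hlt => hlt_irrefl s' s hlt hs' hs)
      (le_of_not_gt fun hlt => hlt_irrefl s s' hlt hs hs')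
  have hae : ∀ᵐ t ∂Measure.infinitePi fun _ : ι => (volume : Measure unitInterval),
      ∀ p q : ℚ, p < q → t ∉ bad p q := by
    simp only [ae_all_iff]
    exact fun p q hpq => measure_eq_zero_iff_ae_notMem.1 (hbad p q hpq)
  filter_upwards [hae] with t ht
  suffices hle : ∀ a b, IsMinOn (Φ t) univ a → IsMinOn (Φ t) univ b → v b ≤ v a from
    fun a b ha hb => le_antisymm (hle b a hb ha) (hle a b ha hb)
  intro a b ha hb
  by_contra! hlt
  obtain ⟨p, hap, hpb⟩ := exists_rat_btwn hlt
  obtain ⟨q, hpq, hqb⟩ := exists_rat_btwn hpb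
  exact ht p q (by exact_mod_cast hpq) ⟨a, b, ha, hb, hap.le, hqb.le⟩

end GenericMinimizers

theorem eq_of_dist_mul_dist_eq {ι Y : Type*} [MetricSpace Y] {z : ι → Y} (hz : DenseRange z)
    {x a b : Y} (hxb : x ≠ b) (h : ∀ i, dist x a * dist a (z i) = dist x b * dist b (z i)) :
    a = b := by
  have heq : (fun y => dist x a * dist a y) = fun y => dist x b * dist b y :=
    hz.equalizer (by fun_prop) (by fun_prop) (funext h)
  have hzero : dist x b * dist b a = 0 := by simpa using (congrFun heq a).symm
  exact (dist_eq_zero.1 ((mul_eq_zero.1 hzero).resolve_left (dist_ne_zero.2 hxb))).symm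

section PerturbedDistance

variable {Y : Type*} [MetricSpace Y] [CompactSpace Y] [Nonempty Y]

/-- A nonnegative continuous function on `Y` depending on a parameter `t` in the Hilbert cube: the
coordinate `t k` weights the distance to the `k`-th point of a dense sequence, and the factors
`2⁻ᵏ` make the series converge uniformly. -/
def perturbation (t : ℕ → unitInterval) (a : Y) : ℝ :=
  ∑' k, t k * ((1 / 2 : ℝ) ^ k * dist a (denseSeq Y k))

/-- The distance from `x` to `a`, randomly distorted by a factor depending on `a`. For almost every
`t` its minimizer over a given compact set is unique. -/
def perturbedDist (t : ℕ → unitInterval) (x a : Y) : ℝ :=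
  dist x a * (1 + perturbation t a)

theorem norm_perturbation_term_le (t : ℕ → unitInterval) (a : Y) (k : ℕ) :
    ‖t k * ((1 / 2 : ℝ) ^ k * dist a (denseSeq Y k))‖ ≤
      (1 / 2 : ℝ) ^ k * Metric.diam (univ : Set Y) := by
  have hdist : dist a (denseSeq Y k) ≤ Metric.diam (univ : Set Y) :=
    Metric.dist_le_diam_of_mem isCompact_univ.isBounded (mem_univ _) (mem_univ _)
  have hterm : 0 ≤ (1 / 2 : ℝ) ^ k * dist a (denseSeq Y k) := by positivity
  rw [Real.norm_of_nonneg (mul_nonneg (t k).2.1 hterm)]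
  exact (mul_le_of_le_one_left hterm (t k).2.2).trans (by gcongr)

theorem perturbation_nonneg (t : ℕ → unitInterval) (a : Y) : 0 ≤ perturbation t a :=
  tsum_nonneg fun k => mul_nonneg (t k).2.1 (by positivity)

theorem perturbation_update (t : ℕ → unitInterval) (k : ℕ) (s : unitInterval) (a : Y) :
    perturbation (Function.update t k s) a =
      perturbation t a + (s - t k) * ((1 / 2 : ℝ) ^ k * dist a (denseSeq Y k)) := by
  have hsummable (t : ℕ → unitInterval) :
      Summable fun k => t k * ((1 / 2 : ℝ) ^ k * dist a (denseSeq Y k)) :=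
    .of_norm_bounded (summable_geometric_two.mul_right _) (norm_perturbation_term_le t a)
  rw [← sub_eq_iff_eq_add', perturbation, perturbation, ← (hsummable _).tsum_sub (hsummable _),
    tsum_eq_single k fun i hi => by rw [Function.update_of_ne hi, sub_self],
    Function.update_self, sub_mul]

theorem continuous_perturbation :
    Continuous fun p : (ℕ → unitInterval) × Y => perturbation p.1 p.2 :=
  continuous_tsum (fun k => by fun_prop) (summable_geometric_two.mul_right _)
    fun k p => norm_perturbation_term_le p.1 p.2 k

theorem continuous_perturbedDist :
    Continuous fun p : (ℕ → unitInterval) × Y × Y => perturbedDist p.1 p.2.1 p.2.2 :=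
  continuous_snd.fst.dist continuous_snd.snd |>.mul <|
    continuous_const.add <| continuous_perturbation.comp <| continuous_fst.prodMk continuous_snd.snd

theorem eq_of_isMinOn_perturbedDist_of_mem {t : ℕ → unitInterval} {x a : Y} {A : Set Y}
    (hx : x ∈ A) (ha : IsMinOn (perturbedDist t x) A a) : a = x := by
  have hle : dist x a * (1 + perturbation t a) ≤ 0 := by
    simpa [perturbedDist] using isMinOn_iff.1 ha x hx
  have hpos : 0 < 1 + perturbation t a := by linarith [perturbation_nonneg t a]
  exact (dist_le_zero.1 (nonpos_of_mul_nonpos_left hle hpos)).symm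

/-- The uniform probability measure on the Hilbert cube. -/
abbrev cubeMeasure : Measure (ℕ → unitInterval) :=
  Measure.infinitePi fun _ => volume

theorem ae_eq_of_isMinOn_perturbedDist {A : Set Y} (hA : IsCompact A) (x : Y) :
    ∀ᵐ t ∂cubeMeasure, ∀ a ∈ A, ∀ b ∈ A, IsMinOn (perturbedDist t x) A a →
      IsMinOn (perturbedDist t x) A b → a = b := by
  by_cases hx : x ∈ A
  · refine .of_forall fun t a _ b _ ha hb => ?_
    rw [eq_of_isMinOn_perturbedDist_of_mem hx ha, eq_of_isMinOn_perturbedDist_of_mem hx hb]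
  have := isCompact_iff_compactSpace.1 hA
  have hslope (k : ℕ) := ae_slope_eq_of_isMinOn (k := k) (Φ := fun t (a : A) => perturbedDist t x a)
    (v := fun a : A => dist x a * ((1 / 2 : ℝ) ^ k * dist (a : Y) (denseSeq Y k)))
    (continuous_perturbedDist.comp
      (continuous_fst.prodMk (continuous_const.prodMk continuous_snd.subtype_val)))
    (by fun_prop) fun t s a => by simp only [perturbedDist, perturbation_update]; ring
  filter_upwards [ae_all_iff.2 hslope] with t ht a ha b hb hmina hminb
  have hxb : x ≠ b := (ne_of_mem_of_not_mem hb hx).symm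
  refine eq_of_dist_mul_dist_eq (denseRange_denseSeq Y) hxb fun k => ?_
  have hk := ht k ⟨a, ha⟩ ⟨b, hb⟩ (fun c _ => hmina c.2) (fun c _ => hminb c.2)
  refine mul_left_cancel₀ (pow_ne_zero k (one_half_pos (α := ℝ)).ne') ?_
  simpa only [mul_left_comm] using hk

theorem exists_isMinOn_perturbedDist (t : ℕ → unitInterval) (A : NonemptyCompacts Y) (x : Y) :
    ∃ a ∈ A, IsMinOn (perturbedDist t x) A a :=
  A.isCompact.exists_isMinOn A.nonempty <| Continuous.continuousOn <|
    continuous_perturbedDist.comp (continuous_const.prodMk (continuous_const.prodMk continuous_id))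

/-- A point of `A` nearest to `x` for the randomly perturbed distance, chosen arbitrarily when there
are several. -/
def nearestPoint (t : ℕ → unitInterval) (A : NonemptyCompacts Y) (x : Y) : Y :=
  (exists_isMinOn_perturbedDist t A x).choose

theorem nearestPoint_mem (t : ℕ → unitInterval) (A : NonemptyCompacts Y) (x : Y) :
    nearestPoint t A x ∈ A :=
  (exists_isMinOn_perturbedDist t A x).choose_spec.1

theorem isMinOn_nearestPoint (t : ℕ → unitInterval) (A : NonemptyCompacts Y) (x : Y) :
    IsMinOn (perturbedDist t x) A (nearestPoint t A x) :=
  (exists_isMinOn_perturbedDist t A x).choose_spec.2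

theorem nearestPoint_of_mem (t : ℕ → unitInterval) {A : NonemptyCompacts Y} {x : Y} (hx : x ∈ A) :
    nearestPoint t A x = x :=
  eq_of_isMinOn_perturbedDist_of_mem hx (isMinOn_nearestPoint t A x)

theorem ae_continuousAt_nearestPoint (A : NonemptyCompacts Y) (x : Y) :
    ∀ᵐ t ∂cubeMeasure, ContinuousAt
      (fun q : (ℕ → unitInterval) × NonemptyCompacts Y × Y => nearestPoint q.1 q.2.1 q.2.2)
      (t, A, x) := by
  filter_upwards [ae_eq_of_isMinOn_perturbedDist A.isCompact x] with t ht
  have hcont : Continuous fun p : ((ℕ → unitInterval) × NonemptyCompacts Y × Y) × Y =>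
      perturbedDist p.1.1 p.1.2.2 p.2 :=
    continuous_perturbedDist.comp
      (continuous_fst.fst.prodMk (continuous_fst.snd.snd.prodMk continuous_snd))
  refine tendsto_of_isMinOn (f := fun q => perturbedDist q.1 q.2.2) (f₀ := perturbedDist t x)
    (K := fun q => q.2.1) (continuous_snd.fst.tendsto (t, A, x)) (fun a => ?_)
    (fun q => nearestPoint_mem _ _ _) (fun q => isMinOn_nearestPoint _ _ _)
    fun a ha hmin => ht a ha _ (nearestPoint_mem t A x) hmin (isMinOn_nearestPoint t A x)
  rw [← nhds_prod_eq]
  exact hcont.tendsto ((t, A, x), a)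

end PerturbedDistance

/-! ### Integrals depending on a parameter -/

section Integral

variable {T E : Type*} [TopologicalSpace T] [MeasurableSpace T] [BorelSpace T] {μ : Measure T}
  [NormedAddCommGroup E] [SecondCountableTopologyEither T E]

theorem aestronglyMeasurable_of_ae_continuousAt {f : T → E} (hf : ∀ᵐ t ∂μ, ContinuousAt f t) :
    AEStronglyMeasurable f μ := by
  have hmeas : MeasurableSet {t | ContinuousAt f t} :=
    (IsGδ.setOfPred_continuousAt f).measurableSet
  rw [← Measure.restrict_eq_self_of_ae_mem hf]
  exact ContinuousOn.aestronglyMeasurable (fun t ht => ContinuousAt.continuousWithinAt ht) hmeas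

theorem continuous_integral_of_ae_continuousAt [NormedSpace ℝ E] [IsFiniteMeasure μ] {P : Type*}
    [TopologicalSpace P] [FirstCountableTopology P] {G : T → P → E}
    (hG : ∀ p, ∀ᵐ t ∂μ, ContinuousAt ↿G (t, p))
    (hbound : ∀ p₀, ∃ M, ∀ᶠ p in 𝓝 p₀, ∀ t, ‖G t p‖ ≤ M) :
    Continuous fun p => ∫ t, G t p ∂μ := by
  refine continuous_iff_continuousAt.2 fun p₀ => ?_
  obtain ⟨M, hM⟩ := hbound p₀
  refine tendsto_integral_filter_of_dominated_convergence (fun _ => M) (.of_forall fun p => ?_)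
    (hM.mono fun p hp => .of_forall hp) (integrable_const M) ((hG p₀).mono fun t ht => ?_)
  · exact aestronglyMeasurable_of_ae_continuousAt <| (hG p).mono fun t ht =>
      ht.comp (f := fun t => (t, p)) (by fun_prop)
  · exact ht.tendsto.comp (f := fun p => (t, p)) (by fun_prop : ContinuousAt _ p₀)

end Integral

/-! ### The extension operator -/

namespace PartialCPM

variable {Y : Type*} [MetricSpace Y] [CompactSpace Y] [Nonempty Y]

/-- The pullback of `ρ` along the random nearest-point retraction onto its domain. -/
def retractedDist (ρ : PartialCPM Y) (t : ℕ → unitInterval) (x y : Y) : ℝ :=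
  ρ.d (nearestPoint t ρ.compactDom x) (nearestPoint t ρ.compactDom y)

theorem nearestPoint_mem_dom (ρ : PartialCPM Y) (t : ℕ → unitInterval) (x : Y) :
    nearestPoint t ρ.compactDom x ∈ ρ.dom :=
  nearestPoint_mem t ρ.compactDom x

theorem ae_continuousAt_retractedDist (ρ : PartialCPM Y) (x y : Y) :
    ∀ᵐ t ∂cubeMeasure, ContinuousAt (fun q : (ℕ → unitInterval) × PartialCPM Y × Y × Y =>
      q.2.1.retractedDist q.1 q.2.2.1 q.2.2.2) (t, ρ, x, y) := by
  filter_upwards [ae_continuousAt_nearestPoint ρ.compactDom x,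
    ae_continuousAt_nearestPoint ρ.compactDom y] with t htx hty
  have hdom : Continuous fun q : (ℕ → unitInterval) × PartialCPM Y × Y × Y => q.2.1.compactDom :=
    continuous_compactDom.comp continuous_snd.fst
  refine tendsto_d continuousAt_snd.fst (ContinuousAt.tendsto ?_) (ContinuousAt.tendsto ?_)
    (fun q => nearestPoint_mem_dom _ _ _) fun q => nearestPoint_mem_dom _ _ _
  · exact htx.comp (x := (t, ρ, x, y)) (f := fun q => (q.1, q.2.1.compactDom, q.2.2.1))
      (by fun_prop)
  · exact hty.comp (x := (t, ρ, x, y)) (f := fun q => (q.1, q.2.1.compactDom, q.2.2.2))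
      (by fun_prop)

theorem integrable_retractedDist (ρ : PartialCPM Y) (x y : Y) :
    Integrable (fun t => ρ.retractedDist t x y) cubeMeasure := by
  obtain ⟨M, hM⟩ := ρ.eventually_norm_d_le
  refine .of_bound (C := M) (aestronglyMeasurable_of_ae_continuousAt ?_) (.of_forall fun t =>
    hM.self_of_nhds _ (ρ.nearestPoint_mem_dom t x) _ (ρ.nearestPoint_mem_dom t y))
  filter_upwards [ρ.ae_continuousAt_retractedDist x y] with t ht
  exact ht.comp (f := fun t => (t, ρ, x, y)) (by fun_prop)

theorem continuous_integral_retractedDist :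
    Continuous fun q : PartialCPM Y × Y × Y =>
      ∫ t, q.1.retractedDist t q.2.1 q.2.2 ∂cubeMeasure := by
  refine continuous_integral_of_ae_continuousAt
    (fun q => ae_continuousAt_retractedDist q.1 q.2.1 q.2.2) fun q => ?_
  obtain ⟨M, hM⟩ := q.1.eventually_norm_d_le
  exact ⟨M, (continuous_fst.tendsto q |>.eventually hM).mono fun p hp t =>
    hp _ (p.1.nearestPoint_mem_dom t _) _ (p.1.nearestPoint_mem_dom t _)⟩

/-- The mean of the pullbacks of `ρ` along the random nearest-point retractions. -/
def extension (ρ : PartialCPM Y) : CPM Y where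
  d x y := ∫ t, ρ.retractedDist t x y ∂cubeMeasure
  refl x := by simp [retractedDist, ρ.refl _ (ρ.nearestPoint_mem_dom _ x)]
  symm x y := integral_congr_ae <| .of_forall fun t =>
    ρ.symm _ (ρ.nearestPoint_mem_dom t x) _ (ρ.nearestPoint_mem_dom t y)
  triangle x y z := by
    rw [← integral_add (ρ.integrable_retractedDist x y) (ρ.integrable_retractedDist y z)]
    exact integral_mono (ρ.integrable_retractedDist x z)
      ((ρ.integrable_retractedDist x y).add (ρ.integrable_retractedDist y z)) fun t =>
        ρ.triangle _ (ρ.nearestPoint_mem_dom t x) _ (ρ.nearestPoint_mem_dom t y) _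
          (ρ.nearestPoint_mem_dom t z)
  cont := continuous_integral_retractedDist.comp (continuous_const.prodMk continuous_id)

theorem continuous_extension : Continuous (extension : PartialCPM Y → CPM Y) :=
  CPM.continuous_of_continuous_d continuous_integral_retractedDist

theorem extension_d_of_mem (ρ : PartialCPM Y) {x y : Y} (hx : x ∈ ρ.dom) (hy : y ∈ ρ.dom) :
    ρ.extension.d x y = ρ.d x y := by
  have hretract (t : ℕ → unitInterval) : ρ.retractedDist t x y = ρ.d x y := by
    rw [retractedDist, nearestPoint_of_mem t hx, nearestPoint_of_mem t hy]
  simp [extension, hretract]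

theorem extension_d_mul {ρ σ : PartialCPM Y} {c : ℝ} (hσ : σ.dom = ρ.dom)
    (h : ∀ a ∈ ρ.dom, ∀ b ∈ ρ.dom, σ.d a b = c * ρ.d a b) (x y : Y) :
    σ.extension.d x y = c * ρ.extension.d x y := by
  simp only [extension, retractedDist, compactDom_congr hσ, ← integral_const_mul]
  exact integral_congr_ae <| .of_forall fun t =>
    h _ (ρ.nearestPoint_mem_dom t x) _ (ρ.nearestPoint_mem_dom t y)

theorem extension_d_add {ρ σ τ : PartialCPM Y} (hσ : σ.dom = ρ.dom) (hτ : τ.dom = ρ.dom)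
    (h : ∀ a ∈ ρ.dom, ∀ b ∈ ρ.dom, τ.d a b = ρ.d a b + σ.d a b) (x y : Y) :
    τ.extension.d x y = ρ.extension.d x y + σ.extension.d x y := by
  have hpoint (t : ℕ → unitInterval) :
      τ.retractedDist t x y = ρ.retractedDist t x y + σ.retractedDist t x y := by
    simp only [retractedDist, compactDom_congr hσ, compactDom_congr hτ]
    exact h _ (ρ.nearestPoint_mem_dom t x) _ (ρ.nearestPoint_mem_dom t y)
  simp only [extension, hpoint]
  exact integral_add (ρ.integrable_retractedDist x y) (σ.integrable_retractedDist x y)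

theorem extension_d_le {ρ : PartialCPM Y} {C : ℝ} (h : ∀ a ∈ ρ.dom, ∀ b ∈ ρ.dom, ρ.d a b ≤ C)
    (x y : Y) : ρ.extension.d x y ≤ C := by
  have hmono : ∫ t, ρ.retractedDist t x y ∂cubeMeasure ≤ ∫ _, C ∂cubeMeasure :=
    integral_mono (ρ.integrable_retractedDist x y) (integrable_const C) fun t =>
      h _ (ρ.nearestPoint_mem_dom t x) _ (ρ.nearestPoint_mem_dom t y)
  simpa [extension] using hmono

theorem iSup_extension_d (ρ : PartialCPM Y) :
    ⨆ p : Y × Y, ρ.extension.d p.1 p.2 = ⨆ p : ρ.dom × ρ.dom, ρ.d p.1 p.2 := by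
  have : Nonempty ρ.dom := ρ.dom_ne.to_subtype
  obtain ⟨M, hM⟩ := ρ.eventually_norm_d_le
  have hle_M : ∀ a ∈ ρ.dom, ∀ b ∈ ρ.dom, ρ.d a b ≤ M := fun a ha b hb =>
    (le_abs_self _).trans (hM.self_of_nhds a ha b hb)
  refine le_antisymm (ciSup_le fun p => extension_d_le (fun a ha b hb => ?_) _ _)
    (ciSup_le fun p => ?_)
  · exact le_ciSup (f := fun p : ρ.dom × ρ.dom => ρ.d p.1 p.2)
      ⟨M, forall_mem_range.2 fun p => hle_M _ p.1.2 _ p.2.2⟩ (⟨a, ha⟩, ⟨b, hb⟩)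
  · rw [← ρ.extension_d_of_mem p.1.2 p.2.2]
    exact le_ciSup (f := fun p : Y × Y => ρ.extension.d p.1 p.2)
      ⟨M, forall_mem_range.2 fun p => extension_d_le hle_M _ _⟩ (p.1.1, p.2.1)

end PartialCPM

theorem stmt_6
    (X : Type*) [TopologicalSpace X] [CompactSpace X] [T2Space X]
    [MetrizableSpace X] [Nontrivial X] :
    ∃ u : PartialCPM X → CPM X,
      -- (i) u is an extension operator
      (∀ (ρ : PartialCPM X) (x y : X), x ∈ ρ.dom → y ∈ ρ.dom →
        (u ρ).d x y = ρ.d x y) ∧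
      -- (ii) u is linear: positively homogeneous ...
      (∀ c : ℝ, 0 ≤ c → ∀ ρ σ : PartialCPM X, σ.dom = ρ.dom →
        (∀ a ∈ ρ.dom, ∀ b ∈ ρ.dom, σ.d a b = c * ρ.d a b) →
        ∀ x y : X, (u σ).d x y = c * (u ρ).d x y) ∧
      -- ... and additive on pairs with equal domains
      (∀ ρ σ τ : PartialCPM X, σ.dom = ρ.dom → τ.dom = ρ.dom →
        (∀ a ∈ ρ.dom, ∀ b ∈ ρ.dom, τ.d a b = ρ.d a b + σ.d a b) →
        ∀ x y : X, (u τ).d x y = (u ρ).d x y + (u σ).d x y) ∧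
      -- (iii) u is regular
      (∀ ρ : PartialCPM X,
        (⨆ p : X × X, (u ρ).d p.1 p.2) = ⨆ p : ρ.dom × ρ.dom, ρ.d p.1 p.2) ∧
      -- (iv) u is continuous
      Continuous u := by
  let : MetricSpace X := metrizableSpaceMetric X
  exact ⟨PartialCPM.extension, fun ρ _ _ hx hy => ρ.extension_d_of_mem hx hy,
    fun _ _ _ _ => PartialCPM.extension_d_mul, fun _ _ _ => PartialCPM.extension_d_add,
    PartialCPM.iSup_extension_d, PartialCPM.continuous_extension⟩

end
end

section
/- Let X be a compact metrizable space and let M̃ = ⋃{M(A) : A ∈ exp X, |A| ≥ 2} be the set of continuous metrics defined on closed subsets of X having at least two points. There exists a regular extension operator ũ : PM → PM(X) such that ũ(M̃) ⊆ M(X); that is, ũ(ρ) restricted to dom ρ × dom ρ equals ρ and sup_{x,y ∈ X} ũ(ρ)(x,y) = sup_{x,y ∈ dom ρ} ρ(x,y) for every ρ ∈ PM, and ũ(ρ) is a continuous metric on X whenever ρ is a continuous metric on a closed subset of X with at least two points. -/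
/- STATEMENT 7: Let X be a compact metrizable space and M̃ the set of continuous
   metrics defined on closed subsets of X with at least two points.  There
   exists a regular extension operator ũ : PM → PM(X) with ũ(M̃) ⊆ M(X):
   ũ(ρ) extends ρ, sup ũ(ρ) = sup ρ, and ũ(ρ) is a metric on X whenever ρ is a
   metric on a closed subset of X with at least two points. -/

open TopologicalSpace Set

noncomputable section

/-!
Let `A` be the compact domain of a continuous pseudometric `ρ`. Tietze's theorem extends
`ρ : A × A → ℝ` to a continuous `F : X × A → ℝ`, and `x ↦ F (x, ·)` is then a continuous map
`X → C(A, ℝ)` which on `A` is the Kuratowski map `x ↦ ρ (x, ·)`, an isometry for `ρ`. Hence the sup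
distance of `F (x, ·)` and `F (y, ·)` is a continuous pseudometric on `X` extending `ρ`.

To separate points, add the pseudometric that collapses `A` to a point: it vanishes on `A × A`, so
the sum still extends `ρ`, and it is positive on all other pairs of distinct points. Truncating the
sum at `sup ρ` makes the extension regular and, as soon as `sup ρ > 0`, preserves positivity.
-/

section Extension

variable {X : Type*} [TopologicalSpace X]

namespace CPM

lemma nonneg (m : CPM X) (x y : X) : 0 ≤ m.d x y := by
  linarith [m.triangle x y x, m.refl x, m.symm x y]

instance : Add (CPM X) where
  add m n :=
    { d := fun x y => m.d x y + n.d x y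
      refl := fun x => by rw [m.refl, n.refl, add_zero]
      symm := fun x y => by rw [m.symm, n.symm]
      triangle := fun x y z => by linarith [m.triangle x y z, n.triangle x y z]
      cont := m.cont.add n.cont }

lemma d_add (m n : CPM X) (x y : X) : (m + n).d x y = m.d x y + n.d x y := rfl

/-- The continuous pseudometric `min c m`, the truncation of `m` at height `c`. -/
def truncate (m : CPM X) {c : ℝ} (hc : 0 ≤ c) : CPM X where
  d x y := min c (m.d x y)
  refl x := by rw [m.refl, min_eq_right hc]
  symm x y := by rw [m.symm]
  triangle x y z := by
    have hxy := m.nonneg x y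
    have hyz := m.nonneg y z
    have hxyz := m.triangle x y z
    grind
  cont := continuous_const.min m.cont

/-- The continuous pseudometric induced on `X` by a continuous map to a pseudometric space. -/
def comap {Y : Type*} [PseudoMetricSpace Y] (f : C(X, Y)) : CPM X where
  d x y := dist (f x) (f y)
  refl _ := dist_self _
  symm _ _ := dist_comm _ _
  triangle _ _ _ := dist_triangle _ _ _
  cont := by fun_prop

/-- The continuous pseudometric on a pseudometric space obtained by collapsing `A` to a point: the
shorter of the direct way from `x` to `y` and the way through `A`, on which moving is free. -/
def collapse {X : Type*} [PseudoMetricSpace X] (A : Set X) : CPM X where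
  d x y := min (dist x y) (Metric.infDist x A + Metric.infDist y A)
  refl x := by
    rw [dist_self, min_eq_left (add_nonneg Metric.infDist_nonneg Metric.infDist_nonneg)]
  symm x y := by rw [dist_comm, add_comm]
  triangle x y z := by
    have hxyz := dist_triangle x y z
    have hxy : Metric.infDist x A ≤ Metric.infDist y A + dist x y :=
      Metric.infDist_le_infDist_add_dist
    have hzy : Metric.infDist z A ≤ Metric.infDist y A + dist y z :=
      dist_comm z y ▸ Metric.infDist_le_infDist_add_dist
    have hy : 0 ≤ Metric.infDist y A := Metric.infDist_nonneg
    grind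
  cont := by
    have := Metric.continuous_infDist_pt A
    fun_prop

lemma collapse_eq_zero_of_mem {X : Type*} [PseudoMetricSpace X] {A : Set X} {x y : X}
    (hx : x ∈ A) (hy : y ∈ A) : (collapse A).d x y = 0 := by
  simp only [collapse, Metric.infDist_zero_of_mem hx, Metric.infDist_zero_of_mem hy, add_zero,
    min_eq_right dist_nonneg]

lemma eq_or_mem_of_collapse_eq_zero {X : Type*} [MetricSpace X] {A : Set X} (hA : IsClosed A)
    (hne : A.Nonempty) {x y : X} (h : (collapse A).d x y = 0) : x = y ∨ x ∈ A ∧ y ∈ A := by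
  rcases min_eq_iff.1 h with ⟨hxy, -⟩ | ⟨hxy, -⟩
  · exact .inl (dist_eq_zero.1 hxy)
  · rw [add_eq_zero_iff_of_nonneg Metric.infDist_nonneg Metric.infDist_nonneg] at hxy
    exact .inr ⟨(hA.mem_iff_infDist_zero hne).2 hxy.1, (hA.mem_iff_infDist_zero hne).2 hxy.2⟩

/-- The continuous pseudometric `m` on `X` agrees with `ρ` on the domain of `ρ`. -/
def Extends (m : CPM X) (ρ : PartialCPM X) : Prop :=
  ∀ x y, x ∈ ρ.dom → y ∈ ρ.dom → m.d x y = ρ.d x y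

lemma Extends.add_collapse {X : Type*} [PseudoMetricSpace X] {m : CPM X} {ρ : PartialCPM X}
    (hm : m.Extends ρ) : (m + collapse ρ.dom).Extends ρ := fun x y hx hy => by
  rw [d_add, hm x y hx hy, collapse_eq_zero_of_mem hx hy, add_zero]

end CPM

namespace PartialCPM

variable (ρ : PartialCPM X)

lemma abs_sub_le {x y z : X} (hx : x ∈ ρ.dom) (hy : y ∈ ρ.dom) (hz : z ∈ ρ.dom) :
    |ρ.d x z - ρ.d y z| ≤ ρ.d x y := by
  rw [abs_sub_le_iff]
  constructor <;>
    linarith [ρ.triangle x hx y hy z hz, ρ.triangle y hy x hx z hz, ρ.symm x hx y hy]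

lemma nonneg {x y : X} (hx : x ∈ ρ.dom) (hy : y ∈ ρ.dom) : 0 ≤ ρ.d x y :=
  (abs_nonneg _).trans (ρ.abs_sub_le hx hy hx)

lemma continuous_subtype : Continuous fun p : ρ.dom × ρ.dom => ρ.d p.1 p.2 :=
  ρ.cont.comp_continuous (f := Prod.map Subtype.val Subtype.val) (by fun_prop)
    fun p => ⟨p.1.2, p.2.2⟩

theorem exists_extends [NormalSpace (X × ρ.dom)] (hρ : IsCompact ρ.dom) :
    ∃ m : CPM X, m.Extends ρ := by
  have : CompactSpace ρ.dom := isCompact_iff_compactSpace.1 hρ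
  have isClosedEmbedding :
      Topology.IsClosedEmbedding (Prod.map Subtype.val id : ρ.dom × ρ.dom → X × ρ.dom) :=
    ρ.dom_closed.isClosedEmbedding_subtypeVal.prodMap .id
  obtain ⟨F, hF⟩ : ∃ F : C(X × ρ.dom, ℝ), _ :=
    ContinuousMap.exists_extension' isClosedEmbedding ⟨_, ρ.continuous_subtype⟩
  have F_eq (a b : ρ.dom) : F (a, b) = ρ.d a b := congrFun hF (a, b)
  refine ⟨.comap F.curry, fun x y hx hy => le_antisymm ?_ ?_⟩
  · refine (ContinuousMap.dist_le (ρ.nonneg hx hy)).2 fun z => ?_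
    calc dist (F (x, z)) (F (y, z)) = |ρ.d x z - ρ.d y z| := by
          rw [F_eq ⟨x, hx⟩ z, F_eq ⟨y, hy⟩ z, Real.dist_eq]
      _ ≤ ρ.d x y := ρ.abs_sub_le hx hy z.2
  · calc ρ.d x y = dist (F (x, ⟨y, hy⟩)) (F (y, ⟨y, hy⟩)) := by
          rw [F_eq ⟨x, hx⟩ ⟨y, hy⟩, F_eq ⟨y, hy⟩ ⟨y, hy⟩, ρ.refl y hy, Real.dist_eq, sub_zero,
            abs_of_nonneg (ρ.nonneg hx hy)]
      _ ≤ dist (F.curry x) (F.curry y) :=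
          ContinuousMap.dist_apply_le_dist (f := F.curry x) (g := F.curry y) ⟨y, hy⟩

/-- The diameter of the domain of `ρ`, that is, `sup ρ`; it is the junk value `0` if `ρ` is
unbounded. -/
def diam : ℝ := ⨆ p : ρ.dom × ρ.dom, ρ.d p.1 p.2

lemma diam_nonneg : 0 ≤ ρ.diam :=
  Real.iSup_nonneg fun p => ρ.nonneg p.1.2 p.2.2

variable {ρ}

lemma le_diam (hρ : IsCompact ρ.dom) {x y : X} (hx : x ∈ ρ.dom) (hy : y ∈ ρ.dom) :
    ρ.d x y ≤ ρ.diam := by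
  have : CompactSpace ρ.dom := isCompact_iff_compactSpace.1 hρ
  exact le_ciSup (isCompact_range ρ.continuous_subtype).bddAbove (⟨x, hx⟩, ⟨y, hy⟩)

lemma diam_pos (hρ : IsCompact ρ.dom) (hne : ρ.dom.Nontrivial)
    (hsep : ∀ x ∈ ρ.dom, ∀ y ∈ ρ.dom, x ≠ y → ρ.d x y ≠ 0) : 0 < ρ.diam := by
  obtain ⟨x, hx, y, hy, hxy⟩ := hne
  exact ((ρ.nonneg hx hy).lt_of_ne' (hsep x hx y hy hxy)).trans_le (le_diam hρ hx hy)

end PartialCPM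

namespace CPM.Extends

variable {ρ : PartialCPM X} {m : CPM X}

lemma truncate_diam (hm : m.Extends ρ) (hρ : IsCompact ρ.dom) :
    (m.truncate ρ.diam_nonneg).Extends ρ := fun x y hx hy =>
  (congrArg _ (hm x y hx hy)).trans (min_eq_right (PartialCPM.le_diam hρ hx hy))

lemma iSup_truncate_diam (hm : m.Extends ρ) (hρ : IsCompact ρ.dom) :
    ⨆ p : X × X, (m.truncate ρ.diam_nonneg).d p.1 p.2 = ρ.diam := by
  have : Nonempty ρ.dom := ρ.dom_ne.to_subtype
  have : Nonempty X := ρ.dom_ne.nonempty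
  have truncate_le (p : X × X) : (m.truncate ρ.diam_nonneg).d p.1 p.2 ≤ ρ.diam := min_le_left _ _
  refine le_antisymm (ciSup_le truncate_le) (ciSup_le fun p => ?_)
  rw [← hm.truncate_diam hρ p.1 p.2 p.1.2 p.2.2]
  exact le_ciSup (f := fun p : X × X => (m.truncate ρ.diam_nonneg).d p.1 p.2)
    ⟨ρ.diam, forall_mem_range.2 truncate_le⟩ (p.1, p.2)

lemma add_collapse_ne_zero {X : Type*} [MetricSpace X] {ρ : PartialCPM X} {m : CPM X}
    (hm : m.Extends ρ) (hsep : ∀ x ∈ ρ.dom, ∀ y ∈ ρ.dom, x ≠ y → ρ.d x y ≠ 0) {x y : X}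
    (hxy : x ≠ y) : (m + collapse ρ.dom).d x y ≠ 0 := fun h => by
  rw [d_add, add_eq_zero_iff_of_nonneg (m.nonneg x y) ((collapse ρ.dom).nonneg x y)] at h
  obtain ⟨hx, hy⟩ := (eq_or_mem_of_collapse_eq_zero ρ.dom_closed ρ.dom_ne h.2).resolve_left hxy
  exact hsep x hx y hy hxy (hm x y hx hy ▸ h.1)

end CPM.Extends

end Extension

theorem stmt_7_general (X : Type*) [TopologicalSpace X] [MetrizableSpace X] :
    ∃ u : {ρ : PartialCPM X // IsCompact ρ.dom} → CPM X,
      (∀ ρ (x y : X), x ∈ ρ.1.dom → y ∈ ρ.1.dom → (u ρ).d x y = ρ.1.d x y) ∧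
      (∀ ρ, (⨆ p : X × X, (u ρ).d p.1 p.2) = ⨆ p : ρ.1.dom × ρ.1.dom, ρ.1.d p.1 p.2) ∧
      (∀ ρ, ρ.1.dom.Nontrivial →
        (∀ x ∈ ρ.1.dom, ∀ y ∈ ρ.1.dom, x ≠ y → ρ.1.d x y ≠ 0) →
        ∀ x y : X, x ≠ y → (u ρ).d x y ≠ 0) := by
  let := metrizableSpaceMetric X
  choose m hm using fun ρ : {ρ : PartialCPM X // IsCompact ρ.dom} => ρ.1.exists_extends ρ.2
  refine ⟨fun ρ => (m ρ + .collapse ρ.1.dom).truncate ρ.1.diam_nonneg,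
    fun ρ x y => (hm ρ).add_collapse.truncate_diam ρ.2 x y,
    fun ρ => (hm ρ).add_collapse.iSup_truncate_diam ρ.2, fun ρ hne hsep x y hxy => ?_⟩
  have sum_pos := (CPM.nonneg _ x y).lt_of_ne' ((hm ρ).add_collapse_ne_zero hsep hxy)
  exact (lt_min (PartialCPM.diam_pos ρ.2 hne hsep) sum_pos).ne'

theorem stmt_7
    (X : Type*) [TopologicalSpace X] [CompactSpace X] [T2Space X]
    [MetrizableSpace X] [Nontrivial X] :
    ∃ u : PartialCPM X → CPM X,
      -- ũ is an extension operator
      (∀ (ρ : PartialCPM X) (x y : X), x ∈ ρ.dom → y ∈ ρ.dom →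
        (u ρ).d x y = ρ.d x y) ∧
      -- ũ is regular
      (∀ ρ : PartialCPM X,
        (⨆ p : X × X, (u ρ).d p.1 p.2) = ⨆ p : ρ.dom × ρ.dom, ρ.d p.1 p.2) ∧
      -- ũ(M̃) ⊆ M(X): ũ sends metrics on domains with ≥ 2 points to metrics on X
      (∀ ρ : PartialCPM X, ρ.dom.Nontrivial →
        (∀ x ∈ ρ.dom, ∀ y ∈ ρ.dom, x ≠ y → ρ.d x y ≠ 0) →
        ∀ x y : X, x ≠ y → (u ρ).d x y ≠ 0) := by
  obtain ⟨u, hext, hsup, hsep⟩ := stmt_7_general X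
  exact ⟨fun ρ => u ⟨ρ, ρ.dom_closed.isCompact⟩, fun ρ => hext ⟨ρ, _⟩,
    fun ρ => hsup ⟨ρ, _⟩, fun ρ => hsep ⟨ρ, _⟩⟩

end
end

section
/- (Fryszkowski selection theorem, in the case used in the paper) Let T = [0,1] with Lebesgue measure, let B be a separable Banach space, and let X be a compact metric space. Then every lower semicontinuous multivalued map F from X into L₁(T,B) whose values are closed decomposable subsets of L₁(T,B) admits a continuous single-valued selection f : X → L₁(T,B) with f(x) ∈ F(x) for all x ∈ X. -/
/- STATEMENT 11 (Fryszkowski selection theorem, case used in the paper):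
   Let T = [0,1] with Lebesgue measure, B a separable Banach space, X a compact
   metric space.  Every lower semicontinuous multivalued map F from X into
   L₁(T,B) with (nonempty) closed decomposable values admits a continuous
   single-valued selection f with f(x) ∈ F(x) for all x. -/

open MeasureTheory TopologicalSpace Set

noncomputable section

/-- `L₁(I,B)`: Bochner-integrable functions from the unit interval to `B`. -/
abbrev L1S (B : Type*) [NormedAddCommGroup B] : Type _ :=
  Lp B 1 (volume : Measure unitInterval)

open scoped Classical

/-- A set `Z ⊆ L₁(I,B)` is decomposable if for all `f, g ∈ Z` and every
measurable `S ⊆ I`, the map equal to `f` on `S` and to `g` on `I \ S`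
belongs to `Z`. -/
def Decomposable {B : Type*} [NormedAddCommGroup B] (Z : Set (L1S B)) : Prop :=
  ∀ f ∈ Z, ∀ g ∈ Z, ∀ S : Set unitInterval, MeasurableSet S →
    ∀ h : L1S B, (∀ᵐ t, (h : unitInterval → B) t = S.piecewise (⇑f) (⇑g) t) → h ∈ Z

/-!
Following Michael's scheme for convex-valued maps, one builds a Cauchy sequence of continuous
`ε / 2 ^ k`-approximate selections, whose limit lies in the closed values. The only new point is
that finitely many functions `u i`, chosen near `F x` on the supports of a partition of unity `φ`,
must be combined without convexity. Decomposability suggests setting `g x = u i` on the `i`-th part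
of a measurable partition of `[0, 1]` that depends continuously on `x`, the parts being the sets
where a function `s` falls into consecutive intervals of lengths `φ i x`. For `s t = fract (n * t)`
with `n` large, the equidistribution of `n * t` modulo one makes the `i`-th part carry nearly the
share `φ i x` of the norm of each of finitely many prescribed functions. Hence mixing obeys up to
a small error the estimates that a convex combination would, and does so uniformly in `x`, since by
compactness the differences between points of `F x` and the `u i` are controlled by a finite net.
-/

section ApproximateSelection

open Filter Metric Topology

variable {X E : Type*} [TopologicalSpace X]

theorem isOpen_exists_mem_of_lowerHemicontinuous [TopologicalSpace E] {F : X → Set E}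
    (hF : LowerHemicontinuous F) {W : Set (X × E)} (hW : IsOpen W) :
    IsOpen {x | ∃ u ∈ F x, (x, u) ∈ W} := by
  refine isOpen_iff_mem_nhds.2 fun x ⟨u, hu, hxu⟩ ↦ ?_
  obtain ⟨A, V, hA, hV, hxA, huV, hAV⟩ := isOpen_prod_iff.1 hW x u hxu
  have hFV := (lowerHemicontinuous_iff_isOpen_inter_nonempty.1 hF V hV).mem_nhds ⟨u, hu, huV⟩
  filter_upwards [hA.mem_nhds hxA, hFV] with y hyA ⟨v, hv, hvV⟩
  exact ⟨v, hv, hAV ⟨hyA, hvV⟩⟩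

theorem lowerHemicontinuous_preimage_add_right [TopologicalSpace E] [AddGroup E]
    [IsTopologicalAddGroup E] {F : X → Set E} (hF : LowerHemicontinuous F) {f : X → E}
    (hf : Continuous f) : LowerHemicontinuous fun x ↦ (· + f x) ⁻¹' F x := by
  refine lowerHemicontinuous_iff_isOpen_inter_nonempty.2 fun U hU ↦ ?_
  have hW : IsOpen {p : X × E | p.2 - f p.1 ∈ U} :=
    hU.preimage (continuous_snd.sub (hf.comp continuous_fst))
  convert isOpen_exists_mem_of_lowerHemicontinuous hF hW using 1
  ext x
  constructor
  · rintro ⟨u, huF, huU⟩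
    exact ⟨u + f x, huF, by simpa using huU⟩
  · rintro ⟨v, hvF, hvU⟩
    exact ⟨v - f x, by simpa using hvF, hvU⟩

variable [PseudoMetricSpace E]

theorem exists_finset_net_of_lowerHemicontinuous {F : X → Set E} (hF : LowerHemicontinuous F)
    {K : Set X} (hK : IsCompact K) {V : Set E} (hV : ∀ x ∈ K, (F x ∩ V).Nonempty) {η : ℝ}
    (hη : 0 < η) :
    ∃ D : Finset E, ↑D ⊆ V ∧ ∀ x ∈ K, ∃ v ∈ D, (F x ∩ ball v η).Nonempty := by
  have hopen (v : V) : IsOpen {x | (F x ∩ ball (v : E) η).Nonempty} :=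
    lowerHemicontinuous_iff_isOpen_inter_nonempty.1 hF _ isOpen_ball
  obtain ⟨t, ht⟩ := hK.elim_finite_subcover _ hopen fun x hx ↦ by
    obtain ⟨v, hvF, hvV⟩ := hV x hx
    exact mem_iUnion.2 ⟨⟨v, hvV⟩, v, hvF, mem_ball_self hη⟩
  refine ⟨t.map (Function.Embedding.subtype _), by simp, fun x hx ↦ ?_⟩
  obtain ⟨v, hvt, hxv⟩ := mem_iUnion₂.1 (ht hx)
  exact ⟨v, Finset.mem_map_of_mem _ hvt, hxv⟩

theorem exists_partitionOfUnity_net_of_lowerHemicontinuous [CompactSpace X] [NormalSpace X]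
    {F : X → Set E} (hF : LowerHemicontinuous F) {V : Set E} (hV : ∀ x, (F x ∩ V).Nonempty)
    {δ : ℝ} (hδ : 0 < δ) :
    ∃ (N : ℕ) (u : Fin N → E) (φ : PartitionOfUnity (Fin N) X), (∀ i, u i ∈ V) ∧
      ∀ i, ∀ x ∈ tsupport (φ i), (F x ∩ ball (u i) δ).Nonempty := by
  obtain ⟨D, hDV, hD⟩ := exists_finset_net_of_lowerHemicontinuous hF isCompact_univ
    (fun x _ ↦ hV x) hδ
  let u (i : Fin D.card) : E := D.equivFin.symm i
  obtain ⟨φ, hφ⟩ := PartitionOfUnity.exists_isSubordinate isClosed_univ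
    (fun i ↦ {x | (F x ∩ ball (u i) δ).Nonempty})
    (fun i ↦ lowerHemicontinuous_iff_isOpen_inter_nonempty.1 hF _ isOpen_ball) fun x hx ↦ by
      obtain ⟨v, hv, hxv⟩ := hD x hx
      exact mem_iUnion.2 ⟨D.equivFin ⟨v, hv⟩, by simpa [u] using hxv⟩
  exact ⟨D.card, u, φ, fun i ↦ hDV (D.equivFin.symm i).2, fun i ↦ hφ i⟩

/-- `f` is an `ε`-approximate selection of the multivalued map `F` if every `f x` lies at distance
less than `ε` from some point of `F x`. -/
def IsApproxSelection {X : Type*} (F : X → Set E) (ε : ℝ) (f : X → E) : Prop :=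
  ∀ x, (F x ∩ ball (f x) ε).Nonempty

theorem exists_isApproxSelection_const [CompactSpace X] {F : X → Set E}
    (hF : LowerHemicontinuous F) (hne : ∀ x, (F x).Nonempty) (c : E) :
    ∃ ε > 0, IsApproxSelection F ε fun _ ↦ c := by
  obtain ⟨D, -, hD⟩ := exists_finset_net_of_lowerHemicontinuous hF isCompact_univ (V := univ)
    (by simpa using hne) one_pos
  obtain ⟨R, hR⟩ := D.finite_toSet.isBounded.subset_closedBall c
  refine ⟨max R 0 + 1, by positivity, fun x ↦ ?_⟩
  obtain ⟨v, hvD, u, huF, huv⟩ := hD x (mem_univ x)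
  refine ⟨u, huF, ?_⟩
  have hvc : dist v c ≤ R := hR hvD
  have : dist u v < 1 := huv
  calc dist u c ≤ dist u v + dist v c := dist_triangle ..
    _ < max R 0 + 1 := by linarith [le_max_left R 0]

theorem mem_of_tendsto_isApproxSelection {X : Type*} {F : X → Set E} {x : X}
    (hclosed : IsClosed (F x)) {ε : ℕ → ℝ} (hε : Tendsto ε atTop (𝓝 0)) {f : ℕ → X → E}
    (hf : ∀ k, IsApproxSelection F (ε k) (f k)) {a : E}
    (ha : Tendsto (fun k ↦ f k x) atTop (𝓝 a)) : a ∈ F x := by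
  choose u huF hu using fun k ↦ hf k x
  have hdist : Tendsto (fun k ↦ dist (f k x) (u k)) atTop (𝓝 0) :=
    squeeze_zero (fun _ ↦ dist_nonneg) (fun k ↦ (mem_ball'.1 (hu k)).le) hε
  exact hclosed.mem_of_tendsto (ha.congr_dist hdist) (Eventually.of_forall huF)

theorem exists_continuous_selection_of_refine {E : Type*} [MetricSpace E] [CompleteSpace E]
    [CompactSpace X] {F : X → Set E} (hclosed : ∀ x, IsClosed (F x))
    (hrefine : ∀ ε > 0, ∀ f : C(X, E), IsApproxSelection F ε f →
      ∃ g : C(X, E), IsApproxSelection F (ε / 2) g ∧ dist f g ≤ 2 * ε)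
    {ε : ℝ} (hε : 0 < ε) {f₀ : C(X, E)} (hf₀ : IsApproxSelection F ε f₀) :
    ∃ f : C(X, E), ∀ x, f x ∈ F x := by
  let r (k : ℕ) : ℝ := ε / 2 ^ k
  have hstep (k : ℕ) (f : {f : C(X, E) // IsApproxSelection F (r k) f}) :
      ∃ g : {g : C(X, E) // IsApproxSelection F (r (k + 1)) g}, dist f.1 g.1 ≤ 2 * r k := by
    obtain ⟨g, hg, hfg⟩ := hrefine (r k) (by positivity) f.1 f.2
    exact ⟨⟨g, by rwa [show r (k + 1) = r k / 2 by simp only [r]; ring]⟩, hfg⟩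
  choose next hnext using hstep
  let s (k : ℕ) : {f : C(X, E) // IsApproxSelection F (r k) f} :=
    k.rec ⟨f₀, by simpa [r] using hf₀⟩ next
  have hcauchy : CauchySeq fun k ↦ (s k).1 :=
    cauchySeq_of_le_geometric_two (C := 4 * ε) fun k ↦
      (hnext k (s k)).trans_eq (by simp only [r]; ring)
  obtain ⟨f, hf⟩ := cauchySeq_tendsto_of_complete hcauchy
  have hr : Tendsto r atTop (𝓝 0) :=
    tendsto_const_nhds.div_atTop (tendsto_pow_atTop_atTop_of_one_lt one_lt_two)
  exact ⟨f, fun x ↦ mem_of_tendsto_isApproxSelection (hclosed x) hr (fun k ↦ (s k).2)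
    (((continuous_eval_const x).tendsto f).comp hf)⟩

end ApproximateSelection

section Restriction

open Filter Topology
open scoped ENNReal

variable {α E : Type*} [MeasurableSpace α] {μ : Measure α} [NormedAddCommGroup E] {p : ℝ≥0∞}
  {S S' : Set α}

/-- Multiplication of `Lp` functions by the indicator of the measurable set `S`. -/
def restrictLp (hS : MeasurableSet S) : Lp E p μ →+ Lp E p μ :=
  AddMonoidHom.mk' (fun u ↦ ((Lp.memLp u).indicator hS).toLp (S.indicator u)) fun u v ↦ by
    rw [← MemLp.toLp_add, MemLp.toLp_eq_toLp_iff, ← indicator_add']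
    filter_upwards [Lp.coeFn_add u v] with t ht
    simp only [indicator, ht]

theorem coeFn_restrictLp (hS : MeasurableSet S) (u : Lp E p μ) :
    restrictLp hS u =ᵐ[μ] S.indicator u := by
  rw [restrictLp, AddMonoidHom.mk'_apply]
  exact MemLp.coeFn_toLp _

theorem norm_restrictLp_le (hS : MeasurableSet S) (u : Lp E p μ) : ‖restrictLp hS u‖ ≤ ‖u‖ := by
  refine Lp.norm_le_norm_of_ae_le ?_
  filter_upwards [coeFn_restrictLp hS u] with t ht
  rw [ht]
  exact norm_indicator_le_norm_self _ _

theorem norm_restrictLp_one (hS : MeasurableSet S) (u : Lp E 1 μ) :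
    ‖restrictLp hS u‖ = ∫ t in S, ‖u t‖ ∂μ := by
  rw [L1.norm_eq_integral_norm, ← integral_indicator hS]
  refine integral_congr_ae ?_
  filter_upwards [coeFn_restrictLp hS u] with t ht
  rw [ht, norm_indicator_eq_indicator_norm]

theorem restrictLp_eq_zero_of_eq_empty (hS : MeasurableSet S) (h : S = ∅) (u : Lp E p μ) :
    restrictLp hS u = 0 := by
  refine Lp.ext ?_
  filter_upwards [coeFn_restrictLp hS u, Lp.coeFn_zero E p μ] with t hu h0
  rw [hu, h0, h, indicator_empty, Pi.zero_apply]

theorem restrictLp_restrictLp_of_disjoint (hS : MeasurableSet S) (hS' : MeasurableSet S')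
    (hdisj : Disjoint S S') (u : Lp E p μ) : restrictLp hS (restrictLp hS' u) = 0 := by
  refine Lp.ext ?_
  filter_upwards [coeFn_restrictLp hS (restrictLp hS' u), coeFn_restrictLp hS' u,
    Lp.coeFn_zero E p μ] with t h1 h2 h0
  rw [h1, h0, Pi.zero_apply]
  by_cases ht : t ∈ S
  · rw [indicator_of_mem ht, h2, indicator_of_notMem (disjoint_left.1 hdisj ht)]
  · rw [indicator_of_notMem ht]

theorem sum_restrictLp {ι : Type*} [Fintype ι] {A : ι → Set α} (hA : ∀ i, MeasurableSet (A i))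
    (hdisj : Pairwise (Function.onFun Disjoint A)) (hcover : ⋃ i, A i = univ) (u : Lp E p μ) :
    ∑ i, restrictLp (hA i) u = u := by
  refine Lp.ext ?_
  filter_upwards [eventually_all.2 fun i ↦ coeFn_restrictLp (hA i) u,
    Lp.coeFn_fun_finsetSum Finset.univ fun i ↦ restrictLp (hA i) u] with t hR hsum
  obtain ⟨i, hi⟩ := iUnion_eq_univ_iff.1 hcover t
  rw [hsum, Finset.sum_eq_single_of_mem i (Finset.mem_univ i) fun j _ hj ↦ ?_, hR,
    indicator_of_mem hi]
  rw [hR, indicator_of_notMem (disjoint_right.1 (hdisj hj) hi)]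

theorem tendsto_restrictLp_one {ι : Type*} {l : Filter ι} [l.IsCountablyGenerated]
    {A : ι → Set α} (hA : ∀ i, MeasurableSet (A i)) (hS : MeasurableSet S)
    (hlim : ∀ᵐ t ∂μ, ∀ᶠ i in l, (t ∈ A i ↔ t ∈ S)) (u : Lp E 1 μ) :
    Tendsto (fun i ↦ restrictLp (hA i) u) l (𝓝 (restrictLp hS u)) := by
  have hu : Integrable u μ := L1.integrable_coeFn u
  have hnorm (i : ι) : ‖restrictLp (hA i) u - restrictLp hS u‖ =
      ∫ t, ‖(A i).indicator u t - S.indicator u t‖ ∂μ := by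
    rw [L1.norm_eq_integral_norm]
    refine integral_congr_ae ?_
    filter_upwards [coeFn_restrictLp (hA i) u, coeFn_restrictLp hS u,
      Lp.coeFn_sub (restrictLp (hA i) u) (restrictLp hS u)] with t h1 h2 h3
    rw [h3, Pi.sub_apply, h1, h2]
  rw [tendsto_iff_norm_sub_tendsto_zero]
  simp only [hnorm]
  rw [← integral_zero α ℝ (μ := μ)]
  refine tendsto_integral_filter_of_dominated_convergence (fun t ↦ ‖u t‖ + ‖u t‖)
    (Eventually.of_forall fun i ↦
      ((hu.indicator (hA i)).sub (hu.indicator hS)).norm.aestronglyMeasurable)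
    (Eventually.of_forall fun i ↦ Eventually.of_forall fun t ↦ ?_) (hu.norm.add hu.norm) ?_
  · rw [norm_norm]
    exact norm_sub_le_of_le (norm_indicator_le_norm_self _ _) (norm_indicator_le_norm_self _ _)
  · filter_upwards [hlim] with t ht
    refine tendsto_const_nhds.congr' ?_
    filter_upwards [ht] with i hi
    simp [indicator, hi]

end Restriction

section Decomposable

variable {B : Type*} [NormedAddCommGroup B] {Z : Set (L1S B)}

theorem Decomposable.add_restrictLp_sub_mem (hZ : Decomposable Z) {S : Set unitInterval}
    (hS : MeasurableSet S) {f g : L1S B} (hf : f ∈ Z) (hg : g ∈ Z) :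
    g + restrictLp hS (f - g) ∈ Z := by
  refine hZ f hf g hg S hS _ ?_
  filter_upwards [Lp.coeFn_add g (restrictLp hS (f - g)), coeFn_restrictLp hS (f - g),
    Lp.coeFn_sub f g] with t hadd hres hsub
  rw [hadd, Pi.add_apply, hres]
  by_cases ht : t ∈ S
  · rw [indicator_of_mem ht, hsub, Pi.sub_apply, piecewise_eq_of_mem _ _ _ ht, add_sub_cancel]
  · rw [indicator_of_notMem ht, piecewise_eq_of_notMem _ _ _ ht, add_zero]

theorem Decomposable.sum_restrictLp_mem (hZ : Decomposable Z) {ι : Type*} [Fintype ι]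
    {A : ι → Set unitInterval} (hA : ∀ i, MeasurableSet (A i))
    (hdisj : Pairwise (Function.onFun Disjoint A)) (hcover : ⋃ i, A i = univ)
    {w : ι → L1S B} (hw : ∀ i, w i ∈ Z) : ∑ i, restrictLp (hA i) (w i) ∈ Z := by
  obtain ⟨i₀, -⟩ := iUnion_eq_univ_iff.1 hcover 0
  have hpartial (J : Finset ι) : w i₀ + ∑ i ∈ J, restrictLp (hA i) (w i - w i₀) ∈ Z := by
    induction J using Finset.induction_on with
    | empty => simpa using hw i₀
    | insert j J hj ih =>
      have hzero : restrictLp (hA j) (∑ i ∈ J, restrictLp (hA i) (w i - w i₀)) = 0 := by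
        rw [map_sum]
        exact Finset.sum_eq_zero fun i hi ↦ restrictLp_restrictLp_of_disjoint _ _
          (hdisj (ne_of_mem_of_not_mem hi hj).symm) _
      convert hZ.add_restrictLp_sub_mem (hA j) (hw j) ih using 1
      rw [Finset.sum_insert hj, ← sub_sub, map_sub _ (w j - w i₀), hzero, sub_zero]
      abel
  simpa [Finset.sum_sub_distrib, sum_restrictLp hA hdisj hcover] using hpartial Finset.univ

theorem Decomposable.preimage_add_right (hZ : Decomposable Z) (c : L1S B) :
    Decomposable ((· + c) ⁻¹' Z) := by
  refine fun f hf g hg S hS h hh ↦ hZ _ hf _ hg S hS _ ?_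
  filter_upwards [hh, Lp.coeFn_add f c, Lp.coeFn_add g c, Lp.coeFn_add h c] with t hht hfc hgc hhc
  by_cases ht : t ∈ S <;> simp_all

end Decomposable

section Mixing

open Filter Topology
open scoped ENNReal

theorem partialSum_last {M : Type*} [AddCommMonoid M] {N : ℕ} (w : Fin N → M) :
    Fin.partialSum w (Fin.last N) = ∑ i, w i := by
  simp [Fin.partialSum, List.take_of_length_le, List.sum_ofFn]

theorem monotone_partialSum {M : Type*} [AddMonoid M] [Preorder M] [AddLeftMono M] {N : ℕ}
    {w : Fin N → M} (hw : ∀ i, 0 ≤ w i) : Monotone (Fin.partialSum w) :=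
  Fin.monotone_iff_le_succ.2 fun i ↦ by
    simpa only [Fin.partialSum_succ] using le_add_of_nonneg_right (hw i)

theorem continuous_partialSum {M : Type*} [AddMonoid M] [TopologicalSpace M] [ContinuousAdd M]
    {N : ℕ} (k : Fin (N + 1)) : Continuous fun w : Fin N → M ↦ Fin.partialSum w k := by
  induction k using Fin.induction with
  | zero => simpa only [Fin.partialSum_zero] using continuous_const
  | succ i ih =>
    simp only [Fin.partialSum_succ]
    fun_prop

theorem eventually_mem_Ico_iff {ι β : Type*} [LinearOrder β] [TopologicalSpace β]
    [OrderClosedTopology β] {l : Filter ι} {a b : ι → β} {a₀ b₀ x : β}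
    (ha : Tendsto a l (𝓝 a₀)) (hb : Tendsto b l (𝓝 b₀)) (hxa : x ≠ a₀) (hxb : x ≠ b₀) :
    ∀ᶠ i in l, (x ∈ Ico (a i) (b i) ↔ x ∈ Ico a₀ b₀) := by
  have hle {c : ι → β} {c₀ : β} (hc : Tendsto c l (𝓝 c₀)) (hx : x ≠ c₀) :
      ∀ᶠ i in l, (c i ≤ x ↔ c₀ ≤ x) := by
    rcases hx.lt_or_gt with h | h
    · filter_upwards [hc.eventually_const_lt h] with i hi
      exact iff_of_false hi.not_ge h.not_ge
    · filter_upwards [hc.eventually_lt_const h] with i hi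
      exact iff_of_true hi.le h.le
  filter_upwards [hle ha hxa, hle hb hxb] with i hai hbi
  rw [mem_Ico, mem_Ico, hai, ← not_le, ← not_le, hbi]

theorem Ico_zero_last_subset_iUnion_Ico {β : Type*} [LinearOrder β] {N : ℕ} (a : Fin (N + 1) → β) :
    Ico (a 0) (a (Fin.last N)) ⊆ ⋃ i : Fin N, Ico (a i.castSucc) (a i.succ) := by
  suffices ∀ k, Ico (a 0) (a k) ⊆ ⋃ i : Fin N, Ico (a i.castSucc) (a i.succ) from this _
  intro k
  induction k using Fin.induction with
  | zero => simp
  | succ i ih =>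
    exact Ico_subset_Ico_union_Ico.trans (union_subset ih (subset_iUnion_of_subset i subset_rfl))

variable {α : Type*} {s : α → ℝ} {N : ℕ} {w : Fin N → ℝ}

/-- The set of points at which `s` lies in the `i`-th of the consecutive intervals of lengths
`w 0, w 1, …` that start at `0`. -/
def slice (s : α → ℝ) (w : Fin N → ℝ) (i : Fin N) : Set α :=
  s ⁻¹' Ico (Fin.partialSum w i.castSucc) (Fin.partialSum w i.succ)

theorem pairwise_disjoint_slice (s : α → ℝ) (hw : ∀ i, 0 ≤ w i) :
    Pairwise (Function.onFun Disjoint (slice s w)) := by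
  have hmono := monotone_partialSum hw
  refine (pairwise_disjoint_on _).2 fun i j hij ↦ Disjoint.preimage s ?_
  exact Ico_disjoint_Ico.2 (min_le_of_left_le (le_max_of_le_right (hmono hij)))

theorem slice_eq_empty (s : α → ℝ) {i : Fin N} (hi : w i = 0) : slice s w i = ∅ := by
  simp [slice, Fin.partialSum_succ, hi]

theorem iUnion_slice (hs01 : ∀ t, s t ∈ Ico 0 1) (hw : ∑ i, w i = 1) :
    ⋃ i, slice s w i = univ := by
  refine eq_univ_of_forall fun t ↦ ?_
  simp only [slice, ← preimage_iUnion]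
  refine Ico_zero_last_subset_iUnion_Ico _ ?_
  simpa [partialSum_last, hw] using hs01 t

variable {E : Type*} [MeasurableSpace α] {μ : Measure α} [NormedAddCommGroup E] {p : ℝ≥0∞}

theorem measurableSet_slice (hs : Measurable s) (w : Fin N → ℝ) (i : Fin N) :
    MeasurableSet (slice s w i) :=
  hs measurableSet_Ico

/-- The function that equals `u i` on the `i`-th slice of `s` with respect to the weights `w`. -/
def mix (hs : Measurable s) (w : Fin N → ℝ) (u : Fin N → Lp E p μ) : Lp E p μ :=
  ∑ i, restrictLp (measurableSet_slice hs w i) (u i)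

theorem mix_sub (hs : Measurable s) (w : Fin N → ℝ) (u v : Fin N → Lp E p μ) :
    mix hs w (u - v) = mix hs w u - mix hs w v := by
  simp [mix]

theorem continuous_mix (hs : Measurable s) (hnull : ∀ c, ∀ᵐ t ∂μ, s t ≠ c)
    (u : Fin N → Lp E 1 μ) : Continuous fun w ↦ mix hs w u := by
  refine continuous_finsetSum _ fun i _ ↦ continuous_iff_continuousAt.2 fun w₀ ↦
    tendsto_restrictLp_one _ _ ?_ _
  filter_upwards [hnull (Fin.partialSum w₀ i.castSucc), hnull (Fin.partialSum w₀ i.succ)]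
    with t ht_left ht_right
  exact eventually_mem_Ico_iff ((continuous_partialSum i.castSucc).tendsto w₀)
    ((continuous_partialSum i.succ).tendsto w₀) ht_left ht_right

/-- `s` splits `h` evenly up to `η` if each set `{t | s t ∈ [a, b)}` carries at most the share
`b - a` of the integral of `‖h‖`, with error at most `η`. -/
def SplitsEvenly (μ : Measure α) (s : α → ℝ) (η : ℝ) (h : α → E) : Prop :=
  ∀ ⦃a b : ℝ⦄, 0 ≤ a → a ≤ b → b ≤ 1 →
    ∫ t in s ⁻¹' Ico a b, ‖h t‖ ∂μ ≤ (b - a) * ∫ t, ‖h t‖ ∂μ + η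

theorem SplitsEvenly.norm_restrictLp_slice_le {η : ℝ} {h : Lp E 1 μ} (hh : SplitsEvenly μ s η h)
    (hs : Measurable s) (hw : w ∈ stdSimplex ℝ (Fin N)) (i : Fin N) :
    ‖restrictLp (measurableSet_slice hs w i) h‖ ≤ w i * ‖h‖ + η := by
  have hmono := monotone_partialSum hw.1
  have hnonneg : 0 ≤ Fin.partialSum w i.castSucc := by
    simpa using hmono (Fin.zero_le i.castSucc)
  have hle_one : Fin.partialSum w i.succ ≤ 1 := by
    simpa [partialSum_last, hw.2] using hmono (Fin.le_last i.succ)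
  have := hh hnonneg (hmono (Fin.castSucc_le_succ i)) hle_one
  rwa [Fin.partialSum_succ, add_sub_cancel_left, ← Fin.partialSum_succ,
    ← L1.norm_eq_integral_norm, ← slice, ← norm_restrictLp_one (measurableSet_slice hs w i)] at this

theorem norm_mix_le (hs : Measurable s) (hw : w ∈ stdSimplex ℝ (Fin N)) {c η : ℝ} (hη : 0 ≤ η)
    {v : Fin N → Lp E 1 μ} (hv : ∀ i, w i ≠ 0 →
      ∃ h : Lp E 1 μ, SplitsEvenly μ s η h ∧ ‖h‖ ≤ c ∧ ‖v i - h‖ ≤ η) :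
    ‖mix hs w v‖ ≤ c + N * (2 * η) := by
  have hterm (i : Fin N) :
      ‖restrictLp (measurableSet_slice hs w i) (v i)‖ ≤ w i * c + 2 * η := by
    by_cases hi : w i = 0
    · rw [restrictLp_eq_zero_of_eq_empty _ (slice_eq_empty s hi), norm_zero, hi]
      linarith
    · obtain ⟨h, hsplit, hc, hvh⟩ := hv i hi
      calc ‖restrictLp (measurableSet_slice hs w i) (v i)‖
          = ‖restrictLp (measurableSet_slice hs w i) h
            + restrictLp (measurableSet_slice hs w i) (v i - h)‖ := by
            rw [← map_add, add_sub_cancel]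
        _ ≤ (w i * ‖h‖ + η) + ‖v i - h‖ :=
            norm_add_le_of_le (hsplit.norm_restrictLp_slice_le hs hw i) (norm_restrictLp_le _ _)
        _ ≤ (w i * c + η) + η := by gcongr; exact hw.1 i
        _ = w i * c + 2 * η := by ring
  calc ‖mix hs w v‖ ≤ ∑ i, (w i * c + 2 * η) := norm_sum_le_of_le _ fun i _ ↦ hterm i
    _ = c + N * (2 * η) := by
      simp [Finset.sum_add_distrib, ← Finset.sum_mul, hw.2]

theorem Decomposable.mix_mem {B : Type*} [NormedAddCommGroup B] {Z : Set (L1S B)}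
    (hZ : Decomposable Z) {s : unitInterval → ℝ} (hs : Measurable s) (hs01 : ∀ t, s t ∈ Ico 0 1)
    (hw : w ∈ stdSimplex ℝ (Fin N)) {u : Fin N → L1S B} (hu : ∀ i, u i ∈ Z) : mix hs w u ∈ Z :=
  hZ.sum_restrictLp_mem _ (pairwise_disjoint_slice s hw.1) (iUnion_slice hs01 hw.2) hu

end Mixing

section Sawtooth

open Filter Topology

/-- The sawtooth function of period `1 / n`. -/
def sawtooth (n : ℕ) (r : ℝ) : ℝ := Int.fract (n * r)

theorem measurable_sawtooth (n : ℕ) : Measurable (sawtooth n) :=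
  measurable_fract.comp (measurable_const_mul _)

theorem measurable_sawtooth_coe (n : ℕ) : Measurable fun t : unitInterval ↦ sawtooth n t :=
  (measurable_sawtooth n).comp measurable_subtype_coe

theorem sawtooth_mem_Ico (n : ℕ) (r : ℝ) : sawtooth n r ∈ Ico 0 1 :=
  ⟨Int.fract_nonneg _, Int.fract_lt_one _⟩

theorem countable_sawtooth_preimage_singleton {n : ℕ} (hn : n ≠ 0) (c : ℝ) :
    (sawtooth n ⁻¹' {c}).Countable := by
  refine (countable_range fun k : ℤ ↦ (k + c) / n).mono ?_
  rintro r (hr : sawtooth n r = c)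
  refine ⟨⌊n * r⌋, ?_⟩
  have : (n : ℝ) ≠ 0 := Nat.cast_ne_zero.2 hn
  simp only [← hr, sawtooth, Int.floor_add_fract]
  field_simp

theorem ae_sawtooth_ne {n : ℕ} (hn : n ≠ 0) (c : ℝ) : ∀ᵐ t : unitInterval, sawtooth n t ≠ c := by
  have hcountable : {t : unitInterval | sawtooth n t = c}.Countable :=
    (countable_sawtooth_preimage_singleton hn c).preimage Subtype.val_injective
  filter_upwards [hcountable.ae_notMem volume] with t ht using ht

theorem sawtooth_preimage_Ico_inter_cell {n : ℕ} (hn : n ≠ 0) (k : ℕ) {a b : ℝ} (ha : 0 ≤ a)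
    (hb : b ≤ 1) :
    Ico (k / n : ℝ) ((k + 1) / n) ∩ sawtooth n ⁻¹' Ico a b = Ico ((k + a) / n) ((k + b) / n) := by
  have hn : (0 : ℝ) < n := by positivity
  ext r
  simp only [mem_inter_iff, mem_preimage, mem_Ico, div_le_iff₀ hn, lt_div_iff₀ hn, mul_comm r]
  have hfract (h₁ : k ≤ n * r) (h₂ : n * r < k + 1) : sawtooth n r = n * r - k := by
    have hfloor : ⌊n * r⌋ = (k : ℤ) := Int.floor_eq_iff.2 (by exact_mod_cast And.intro h₁ h₂)
    rw [sawtooth, Int.fract, hfloor, Int.cast_natCast]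
  constructor
  · rintro ⟨⟨h₁, h₂⟩, h₃, h₄⟩
    rw [hfract h₁ h₂] at h₃ h₄
    constructor <;> linarith
  · rintro ⟨h₁, h₂⟩
    have h₃ : k ≤ n * r := by linarith
    have h₄ : n * r < k + 1 := by linarith
    rw [hfract h₃ h₄]
    exact ⟨⟨h₃, h₄⟩, by linarith, by linarith⟩

theorem eventually_dist_le_on_cells {E : Type*} [PseudoMetricSpace E] {g : ℝ → E}
    (hg : Continuous g) {ε : ℝ} (hε : 0 < ε) : ∀ᶠ n : ℕ in atTop,
      ∀ k < n, ∀ r ∈ Icc (k / n : ℝ) ((k + 1) / n), dist (g r) (g (k / n)) ≤ ε := by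
  obtain ⟨δ, hδ, hgδ⟩ := Metric.uniformContinuousOn_iff_le.1
    (isCompact_Icc.uniformContinuousOn_of_continuous (hg.continuousOn (s := Icc 0 1))) ε hε
  filter_upwards [eventually_gt_atTop 0, tendsto_one_div_atTop_nhds_zero_nat.eventually_lt_const hδ]
    with n hn hnδ k hk r hr
  have hk1 : ((k + 1) / n : ℝ) ≤ 1 := by
    rw [div_le_one (by positivity)]
    exact_mod_cast hk
  have hk0 : (0 : ℝ) ≤ k / n := by positivity
  have hlen : ((k + 1) / n : ℝ) = k / n + 1 / n := add_div ..
  refine hgδ r ⟨hk0.trans hr.1, hr.2.trans hk1⟩ _ ⟨hk0, (hr.1.trans hr.2).trans hk1⟩ ?_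
  rw [Real.dist_eq, abs_of_nonneg (sub_nonneg.2 hr.1)]
  linarith [hr.2]

variable {E : Type*} [NormedAddCommGroup E] [NormedSpace ℝ E]

theorem integral_cell_indicator_sawtooth {n : ℕ} (hn : n ≠ 0) (k : ℕ) {a b : ℝ} (ha : 0 ≤ a)
    (hab : a ≤ b) (hb : b ≤ 1) (g : ℝ → E) :
    ∫ r in (k / n : ℝ)..((k + 1) / n), (sawtooth n ⁻¹' Ico a b).indicator g r =
      ∫ r in ((k + a) / n)..((k + b) / n), g r := by
  rw [intervalIntegral.integral_of_le (by gcongr; linarith),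
    intervalIntegral.integral_of_le (by gcongr), ← integral_Ico_eq_integral_Ioc,
    ← integral_Ico_eq_integral_Ioc, setIntegral_indicator (measurable_sawtooth n measurableSet_Ico),
    sawtooth_preimage_Ico_inter_cell hn k ha hb]

theorem norm_integral_sub_smul_le [CompleteSpace E] {g : ℝ → E} {c d ε : ℝ} (hcd : c ≤ d)
    (hg : IntervalIntegrable g volume c d) {m : E} (hm : ∀ r ∈ Icc c d, ‖g r - m‖ ≤ ε) :
    ‖(∫ r in c..d, g r) - (d - c) • m‖ ≤ ε * (d - c) := by
  rw [← intervalIntegral.integral_const, ← intervalIntegral.integral_sub hg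
    intervalIntegrable_const, ← abs_of_nonneg (sub_nonneg.2 hcd)]
  refine intervalIntegral.norm_integral_le_of_norm_le_const fun r hr ↦ hm r ?_
  exact uIcc_of_le hcd ▸ uIoc_subset_uIcc hr

theorem norm_integral_cell_sub_le [CompleteSpace E] {n : ℕ} (hn : n ≠ 0) (k : ℕ) {a b : ℝ}
    (ha : 0 ≤ a) (hab : a ≤ b) (hb : b ≤ 1) {g : ℝ → E} (hg : Continuous g) {m : E} {ε : ℝ}
    (hε : 0 ≤ ε) (hm : ∀ r ∈ Icc (k / n : ℝ) ((k + 1) / n), ‖g r - m‖ ≤ ε) :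
    ‖(∫ r in (k / n : ℝ)..((k + 1) / n), (sawtooth n ⁻¹' Ico a b).indicator g r) -
      (b - a) • ∫ r in (k / n : ℝ)..((k + 1) / n), g r‖ ≤ 2 * ε / n := by
  have hsub : ‖(∫ r in ((k + a) / n : ℝ)..((k + b) / n), g r) - ((b - a) / n) • m‖ ≤ ε / n := by
    have := norm_integral_sub_smul_le (by gcongr) (hg.intervalIntegrable _ _)
      fun r (hr : r ∈ Icc ((k + a) / n : ℝ) ((k + b) / n)) ↦ hm r
        (Icc_subset_Icc (by gcongr; linarith) (by gcongr) hr)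
    rw [← sub_div, add_sub_add_left_eq_sub] at this
    refine this.trans ?_
    rw [← mul_div_assoc]
    gcongr
    exact mul_le_of_le_one_right hε (by linarith)
  have hcell : ‖(∫ r in (k / n : ℝ)..((k + 1) / n), g r) - (1 / n : ℝ) • m‖ ≤ ε / n := by
    have := norm_integral_sub_smul_le (by gcongr; linarith) (hg.intervalIntegrable _ _) hm
    rwa [← sub_div, add_sub_cancel_left, mul_one_div] at this
  rw [integral_cell_indicator_sawtooth hn k ha hab hb]
  calc _ = ‖((∫ r in ((k + a) / n : ℝ)..((k + b) / n), g r) - ((b - a) / n) • m) -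
          (b - a) • ((∫ r in (k / n : ℝ)..((k + 1) / n), g r) - (1 / n : ℝ) • m)‖ := by
        rw [smul_sub, smul_smul, mul_one_div, sub_sub_sub_cancel_right]
    _ ≤ ε / n + 1 * (ε / n) := by
        refine norm_sub_le_of_le hsub ?_
        rw [norm_smul, Real.norm_of_nonneg (sub_nonneg.2 hab)]
        gcongr
        linarith
    _ = 2 * ε / n := by ring

theorem norm_integral_indicator_sawtooth_sub_le [CompleteSpace E] {n : ℕ} (hn : n ≠ 0) {a b : ℝ}
    (ha : 0 ≤ a) (hab : a ≤ b) (hb : b ≤ 1) {g : ℝ → E} (hg : Continuous g) {ε : ℝ} (hε : 0 ≤ ε)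
    (hosc : ∀ k < n, ∀ r ∈ Icc (k / n : ℝ) ((k + 1) / n), dist (g r) (g (k / n)) ≤ ε) :
    ‖(∫ r in (0 : ℝ)..1, (sawtooth n ⁻¹' Ico a b).indicator g r) -
      (b - a) • ∫ r in (0 : ℝ)..1, g r‖ ≤ 2 * ε := by
  have hsum {G : ℝ → E} (hG : ∀ c d, IntervalIntegrable G volume c d) :
      ∫ r in (0 : ℝ)..1, G r = ∑ k ∈ Finset.range n, ∫ r in (k / n : ℝ)..((k + 1) / n), G r := by
    have := intervalIntegral.sum_integral_adjacent_intervals (n := n) (a := fun k ↦ (k / n : ℝ))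
      fun k _ ↦ hG _ _
    simpa [hn] using this.symm
  have hind (c d : ℝ) :
      IntervalIntegrable ((sawtooth n ⁻¹' Ico a b).indicator g) volume c d :=
    intervalIntegrable_iff.2 <| (intervalIntegrable_iff.1 (hg.intervalIntegrable c d)).indicator
      (measurable_sawtooth n measurableSet_Ico)
  rw [hsum hind, hsum fun c d ↦ hg.intervalIntegrable c d, Finset.smul_sum,
    ← Finset.sum_sub_distrib]
  calc _ ≤ ∑ k ∈ Finset.range n, 2 * ε / n := norm_sum_le_of_le _ fun k hk ↦
        norm_integral_cell_sub_le hn k ha hab hb hg hε fun r hr ↦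
          dist_eq_norm (g r) _ ▸ hosc k (Finset.mem_range.1 hk) r hr
    _ = 2 * ε := by
      rw [Finset.sum_const, Finset.card_range, nsmul_eq_mul]
      field_simp

theorem integral_unitInterval_coe (g : ℝ → E) :
    ∫ t : unitInterval, g t = ∫ r in (0 : ℝ)..1, g r := by
  rw [intervalIntegral.integral_of_le zero_le_one, ← integral_Icc_eq_integral_Ioc]
  exact integral_subtype measurableSet_Icc g

theorem eventually_norm_setIntegral_sawtooth_sub_le_of_continuous [CompleteSpace E]
    {g : unitInterval → E} (hg : Continuous g) {ε : ℝ} (hε : 0 < ε) :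
    ∀ᶠ n : ℕ in atTop, ∀ a b : ℝ, 0 ≤ a → a ≤ b → b ≤ 1 →
      ‖(∫ t in (fun t : unitInterval ↦ sawtooth n t) ⁻¹' Ico a b, g t) - (b - a) • ∫ t, g t‖
        ≤ ε := by
  let G : ℝ → E := IccExtend zero_le_one g
  have hG : Continuous G := hg.Icc_extend'
  have hGg (t : unitInterval) : G t = g t := IccExtend_val ..
  filter_upwards [eventually_dist_le_on_cells hG (half_pos hε), eventually_ne_atTop 0]
    with n hosc hn a b ha hab hb
  convert norm_integral_indicator_sawtooth_sub_le hn ha hab hb hG (half_pos hε).le hosc using 1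
  · rw [← integral_unitInterval_coe, ← integral_unitInterval_coe,
      ← integral_indicator (measurable_sawtooth_coe n measurableSet_Ico)]
    simp only [hGg, indicator, mem_preimage]
  · ring

theorem eventually_norm_setIntegral_sawtooth_sub_le [CompleteSpace E]
    {f : unitInterval → E} (hf : Integrable f) {ε : ℝ} (hε : 0 < ε) :
    ∀ᶠ n : ℕ in atTop, ∀ a b : ℝ, 0 ≤ a → a ≤ b → b ≤ 1 →
      ‖(∫ t in (fun t : unitInterval ↦ sawtooth n t) ⁻¹' Ico a b, f t) - (b - a) • ∫ t, f t‖
        ≤ ε := by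
  obtain ⟨g, hfg, hg⟩ := hf.exists_boundedContinuous_integral_sub_le (ε := ε / 3) (by positivity)
  have hsub : Integrable fun t ↦ f t - g t := hf.sub hg
  filter_upwards [eventually_norm_setIntegral_sawtooth_sub_le_of_continuous g.continuous
    (ε := ε / 3) (by positivity)] with n hn a b ha hab hb
  set S := (fun t : unitInterval ↦ sawtooth n t) ⁻¹' Ico a b
  have hS : ‖∫ t in S, (f t - g t)‖ ≤ ε / 3 :=
    (norm_integral_le_integral_norm _).trans <|
      (setIntegral_le_integral hsub.norm (Eventually.of_forall fun _ ↦ norm_nonneg _)).trans hfg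
  have huniv : ‖(b - a) • ∫ t, (f t - g t)‖ ≤ 1 * (ε / 3) := by
    rw [norm_smul, Real.norm_of_nonneg (sub_nonneg.2 hab)]
    gcongr
    · linarith
    · exact (norm_integral_le_integral_norm _).trans hfg
  calc ‖(∫ t in S, f t) - (b - a) • ∫ t, f t‖
      = ‖(∫ t in S, (f t - g t)) + ((∫ t in S, g t) - (b - a) • ∫ t, g t)
          - (b - a) • ∫ t, (f t - g t)‖ := by
        rw [integral_sub hf hg, integral_sub hf.integrableOn hg.integrableOn, smul_sub]
        congr 1
        abel
    _ ≤ ε / 3 + ε / 3 + 1 * (ε / 3) :=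
        norm_sub_le_of_le (norm_add_le_of_le hS (hn a b ha hab hb)) huniv
    _ = ε := by ring

end Sawtooth

section ApproximateSelectionInL1

open Filter Metric Topology

variable {B : Type*} [NormedAddCommGroup B]

theorem eventually_splitsEvenly_sawtooth (h : L1S B) {η : ℝ} (hη : 0 < η) :
    ∀ᶠ n : ℕ in atTop, SplitsEvenly volume (fun t : unitInterval ↦ sawtooth n t) η h := by
  filter_upwards [eventually_norm_setIntegral_sawtooth_sub_le (L1.integrable_coeFn h).norm hη]
    with n hn a b ha hab hb
  have := (le_abs_self _).trans (hn a b ha hab hb)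
  rw [smul_eq_mul] at this
  linarith

theorem Decomposable.exists_mem_norm_sub_mix_le {Z : Set (L1S B)} (hZ : Decomposable Z)
    (hne : Z.Nonempty) {s : unitInterval → ℝ} (hs : Measurable s) (hs01 : ∀ t, s t ∈ Ico 0 1)
    {N : ℕ} {w : Fin N → ℝ} (hw : w ∈ stdSimplex ℝ (Fin N)) {c η : ℝ} (hη : 0 ≤ η)
    {u : Fin N → L1S B} (hu : ∀ i, w i ≠ 0 → ∃ v, (Z ∩ ball v η).Nonempty ∧ ‖v - u i‖ ≤ c ∧
      SplitsEvenly volume s η (v - u i : L1S B)) :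
    ∃ z ∈ Z, ‖z - mix hs w u‖ ≤ c + N * (2 * η) := by
  have hy (i : Fin N) : ∃ y ∈ Z, w i ≠ 0 →
      ∃ h : L1S B, SplitsEvenly volume s η h ∧ ‖h‖ ≤ c ∧ ‖y - u i - h‖ ≤ η := by
    by_cases hi : w i = 0
    · exact hne.imp fun y hyZ ↦ ⟨hyZ, fun hi' ↦ absurd hi hi'⟩
    · obtain ⟨v, ⟨y, hyZ, hyv⟩, hvu, hsplit⟩ := hu i hi
      refine ⟨y, hyZ, fun _ ↦ ⟨v - u i, hsplit, hvu, ?_⟩⟩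
      rw [sub_sub_sub_cancel_right, ← dist_eq_norm]
      exact (mem_ball.1 hyv).le
  choose y hyZ hy using hy
  refine ⟨mix hs w y, hZ.mix_mem hs hs01 hw hyZ, ?_⟩
  rw [← mix_sub]
  exact norm_mix_le hs hw hη hy

variable {X : Type*} [TopologicalSpace X] [CompactSpace X] [NormalSpace X]

theorem exists_continuous_isApproxSelection_norm_le {F : X → Set (L1S B)}
    (hF : LowerHemicontinuous F) (hdec : ∀ x, Decomposable (F x)) {ε δ : ℝ}
    (hε : IsApproxSelection F ε 0) (hδ : 0 < δ) :
    ∃ g : C(X, L1S B), IsApproxSelection F δ g ∧ ∀ x, ‖g x‖ ≤ ε + δ := by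
  obtain ⟨N, u, φ, huε, hφ⟩ :=
    exists_partitionOfUnity_net_of_lowerHemicontinuous hF (V := ball 0 ε) hε (half_pos hδ)
  obtain ⟨η, hη, hNη⟩ : ∃ η > 0, N * 2 * η < δ / 2 := exists_pos_mul_lt (half_pos hδ) _
  rw [mul_assoc] at hNη
  choose D hDu hD using fun i ↦ exists_finset_net_of_lowerHemicontinuous hF
    (isClosed_tsupport (φ i)).isCompact (hφ i) hη
  have hsplit : ∀ᶠ n : ℕ in atTop, ∀ i,
      SplitsEvenly volume (fun t : unitInterval ↦ sawtooth n t) η (u i) ∧ ∀ v ∈ D i,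
        SplitsEvenly volume (fun t : unitInterval ↦ sawtooth n t) η (v - u i : L1S B) :=
    eventually_all.2 fun i ↦ (eventually_splitsEvenly_sawtooth _ hη).and <|
      (D i).eventually_all.2 fun v _ ↦ eventually_splitsEvenly_sawtooth _ hη
  obtain ⟨n, hsplit, hn⟩ := (hsplit.and (eventually_ne_atTop 0)).exists
  let w (x : X) (i : Fin N) : ℝ := φ i x
  have hw (x : X) : w x ∈ stdSimplex ℝ (Fin N) :=
    ⟨fun i ↦ φ.nonneg i x, by simpa [finsum_eq_sum_of_fintype] using φ.sum_eq_one (mem_univ x)⟩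
  have hs := measurable_sawtooth_coe n
  refine ⟨⟨fun x ↦ mix hs (w x) u, (continuous_mix hs (ae_sawtooth_ne hn) u).comp
    (continuous_pi fun i ↦ (φ i).continuous)⟩, fun x ↦ ?_, fun x ↦ ?_⟩
  · obtain ⟨z, hzF, hz⟩ := (hdec x).exists_mem_norm_sub_mix_le (hε x).left hs
      (fun t ↦ sawtooth_mem_Ico n t) (hw x) hη.le (c := δ / 2) fun i hi ↦ by
        obtain ⟨v, hvD, hvF⟩ := hD i x (subset_tsupport _ hi)
        exact ⟨v, hvF, (mem_ball_iff_norm.1 (hDu i hvD)).le, (hsplit i).2 v hvD⟩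
    exact ⟨z, hzF, mem_ball_iff_norm.2 (hz.trans_lt (by linarith))⟩
  · have hmix : ‖mix hs (w x) u‖ ≤ ε + N * (2 * η) := norm_mix_le hs (hw x) hη.le fun i _ ↦
      ⟨u i, (hsplit i).1, (mem_ball_zero_iff.1 (huε i)).le, by simpa using hη.le⟩
    exact hmix.trans (by linarith)

theorem exists_continuous_isApproxSelection_half {F : X → Set (L1S B)}
    (hF : LowerHemicontinuous F) (hdec : ∀ x, Decomposable (F x)) {ε : ℝ} (hε : 0 < ε)
    (f : C(X, L1S B)) (hf : IsApproxSelection F ε f) :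
    ∃ g : C(X, L1S B), IsApproxSelection F (ε / 2) g ∧ dist f g ≤ 2 * ε := by
  have hF_sub := lowerHemicontinuous_preimage_add_right hF f.continuous
  have hf_sub : IsApproxSelection (fun x ↦ (· + f x) ⁻¹' F x) ε 0 := fun x ↦ by
    obtain ⟨u, huF, hu⟩ := hf x
    exact ⟨u - f x, by simpa using huF, by simpa [dist_eq_norm] using hu⟩
  obtain ⟨g, hg, hg_norm⟩ := exists_continuous_isApproxSelection_norm_le hF_sub
    (fun x ↦ (hdec x).preimage_add_right (f x)) hf_sub (half_pos hε)
  refine ⟨g + f, fun x ↦ ?_, (ContinuousMap.dist_le (by positivity)).2 fun x ↦ ?_⟩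
  · obtain ⟨u, huF, hu⟩ := hg x
    exact ⟨u + f x, huF, by simpa using hu⟩
  · calc dist (f x) ((g + f) x) = ‖g x‖ := by simp [dist_eq_norm]
      _ ≤ 2 * ε := by linarith [hg_norm x]

end ApproximateSelectionInL1

theorem stmt_11_general {B : Type*} [NormedAddCommGroup B] [CompleteSpace B] {X : Type*}
    [TopologicalSpace X] [CompactSpace X] [NormalSpace X] {F : X → Set (L1S B)}
    (hF : LowerHemicontinuous F) (hne : ∀ x, (F x).Nonempty) (hclosed : ∀ x, IsClosed (F x))
    (hdec : ∀ x, Decomposable (F x)) : ∃ f : C(X, L1S B), ∀ x, f x ∈ F x := by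
  obtain ⟨ε, hε, hzero⟩ := exists_isApproxSelection_const hF hne 0
  exact exists_continuous_selection_of_refine hclosed
    (fun _ hη g hg ↦ exists_continuous_isApproxSelection_half hF hdec hη g hg) hε
    (f₀ := 0) hzero

theorem stmt_11
    {B : Type*} [NormedAddCommGroup B] [NormedSpace ℝ B] [CompleteSpace B]
    [SeparableSpace B]
    (X : Type*) [MetricSpace X] [CompactSpace X]
    (F : X → Set (L1S B))
    -- F is lower semicontinuous
    (hF_lsc : ∀ U : Set (L1S B), IsOpen U → IsOpen {x : X | (F x ∩ U).Nonempty})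
    -- F has nonempty closed decomposable values
    (hF_ne : ∀ x, (F x).Nonempty)
    (hF_closed : ∀ x, IsClosed (F x))
    (hF_dec : ∀ x, Decomposable (F x)) :
    -- F admits a continuous single-valued selection
    ∃ f : X → L1S B, Continuous f ∧ ∀ x, f x ∈ F x := by
  obtain ⟨f, hf⟩ := stmt_11_general (lowerHemicontinuous_iff_isOpen_inter_nonempty.2 hF_lsc)
    hF_ne hF_closed hF_dec
  exact ⟨f, f.continuous, hf⟩

end
end

section
/- Let X be a compact Hausdorff space admitting a continuous extension operator u : PM → PM(X). Then there exists a continuous map Ψ : (X × X) ∖ Δ_X → PM(X) such that Ψ_{(x,y)}(x,y) = 1 for all (x,y) ∈ (X × X) ∖ Δ_X; namely, Ψ_{(x,y)} = u(v_{(x,y)}) where v_{(x,y)} is the pseudometric on the two-point set {x,y} with v_{(x,y)}(x,y) = 1. -/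
/- STATEMENT 13: Let X be a compact Hausdorff space admitting a continuous
   extension operator u : PM → PM(X).  Then there exists a continuous map
   Ψ : (X × X) ∖ Δ_X → PM(X) with Ψ_{(x,y)}(x,y) = 1 for all (x,y) off the
   diagonal; namely Ψ_{(x,y)} = u(v_{(x,y)}), where v_{(x,y)} is the
   pseudometric on the two-point set {x,y} with v_{(x,y)}(x,y) = 1. -/
open TopologicalSpace Set

noncomputable section

variable {X : Type*} [TopologicalSpace X]

/-
For `x ≠ y` the graph of `v_{(x,y)}` consists of the four points `(x, x, 0)`, `(x, y, 1)`,
`(y, x, 1)`, `(y, y, 0)`, each depending continuously on `(x, y)`, and a set listed by finitely many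
continuous functions varies continuously in the Vietoris topology. So `(x, y) ↦ v_{(x,y)}` is
continuous off the diagonal, and `Ψ` is its composition with `u`.
-/

open scoped Topology

section Vietoris

variable {A Y ι : Type*} [TopologicalSpace A] [TopologicalSpace Y]

theorem continuous_vietoris_iff {F : A → Set Y} :
    Continuous[_, vietoris Y] F ↔
      ∀ U, IsOpen U → IsOpen {a | F a ⊆ U} ∧ IsOpen {a | (F a ∩ U).Nonempty} := by
  refine continuous_generateFrom_iff.trans ⟨fun h U hU => ?_, ?_⟩
  · exact ⟨h _ ⟨U, hU, .inl rfl⟩, h _ ⟨U, hU, .inr rfl⟩⟩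
  · rintro h _ ⟨U, hU, rfl | rfl⟩
    exacts [(h U hU).1, (h U hU).2]

theorem continuous_vietoris_range [Finite ι] {f : A → ι → Y} (hf : Continuous f) :
    Continuous[_, vietoris Y] fun a => range (f a) := by
  have isOpen_preimage (U : Set Y) (hU : IsOpen U) (i : ι) : IsOpen {a | f a i ∈ U} :=
    hU.preimage ((continuous_apply i).comp hf)
  refine continuous_vietoris_iff.2 fun U hU => ⟨?_, ?_⟩
  · simpa only [range_subset_iff, ofPred_forall] using
      isOpen_iInter_of_finite (isOpen_preimage U hU)
  · have meets_iff (a : A) : (range (f a) ∩ U).Nonempty ↔ ∃ i, f a i ∈ U :=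
      inter_nonempty.trans exists_range_iff
    simpa only [meets_iff, ofPred_exists] using isOpen_iUnion (isOpen_preimage U hU)

end Vietoris

namespace PartialCPM

theorem graph_eq_range {ι : Type*} (ρ : PartialCPM X) {x : ι → X} (hx : ρ.dom = range x) :
    ρ.graph = range fun ij : ι × ι => (x ij.1, x ij.2, ρ.d (x ij.1) (x ij.2)) := by
  ext ⟨a, b, r⟩
  simp only [graph, hx, mem_ofPred_eq, mem_range, Prod.exists, Prod.mk.injEq]
  constructor
  · rintro ⟨⟨i, rfl⟩, ⟨j, rfl⟩, rfl⟩
    exact ⟨i, j, rfl, rfl, rfl⟩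
  · rintro ⟨i, j, rfl, rfl, rfl⟩
    exact ⟨⟨i, rfl⟩, ⟨j, rfl⟩, rfl⟩

theorem continuous_of_dom_eq_range {A ι : Type*} [TopologicalSpace A] [Finite ι]
    {ρ : A → PartialCPM X} {x : A → ι → X} (hx : Continuous x)
    (hdom : ∀ a, (ρ a).dom = range (x a))
    (hd : ∀ i j, Continuous fun a => (ρ a).d (x a i) (x a j)) : Continuous ρ := by
  refine continuous_induced_rng.2 ?_
  have graph_eq : graph ∘ ρ = fun a => range fun ij : ι × ι =>
      (x a ij.1, x a ij.2, (ρ a).d (x a ij.1) (x a ij.2)) :=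
    funext fun a => (ρ a).graph_eq_range (hdom a)
  rw [graph_eq]
  refine continuous_vietoris_range (continuous_pi fun ij => ?_)
  have hx_apply (i : ι) : Continuous fun a => x a i := (continuous_apply i).comp hx
  exact (hx_apply ij.1).prodMk ((hx_apply ij.2).prodMk (hd ij.1 ij.2))

open Classical in
/-- The discrete (`0`-`1`) metric on a nonempty finite set `s`, as a partial pseudometric;
`discrete {x, y}` is the pseudometric `v_{(x,y)}` when `x ≠ y`. -/
def discrete [T1Space X] (s : Set X) [Finite s] [Nonempty s] : PartialCPM X where
  dom := s
  dom_ne := nonempty_coe_sort.1 ‹_›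
  dom_closed := s.toFinite.isClosed
  d x y := if x = y then 0 else 1
  refl _ _ := if_pos rfl
  symm _ _ _ _ := by simp only [eq_comm]
  triangle _ _ _ _ _ _ := by grind
  cont := (s.toFinite.prod s.toFinite).continuousOn _

section Discrete

variable [T1Space X] (s : Set X) [Finite s] [Nonempty s]

theorem discrete_d_self (x : X) : (discrete s).d x x = 0 :=
  if_pos rfl

theorem discrete_d_of_ne {x y : X} (h : x ≠ y) : (discrete s).d x y = 1 :=
  if_neg h

end Discrete

theorem continuous_discrete_pair [T1Space X] :
    Continuous fun p : {p : X × X // p.1 ≠ p.2} => discrete {p.1.1, p.1.2} := by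
  have continuous_pair : Continuous fun p : {p : X × X // p.1 ≠ p.2} => ![p.1.1, p.1.2] := by
    fun_prop
  have d_left_right (p : {p : X × X // p.1 ≠ p.2}) :
      (discrete {p.1.1, p.1.2}).d p.1.1 p.1.2 = 1 := discrete_d_of_ne _ p.2
  have d_right_left (p : {p : X × X // p.1 ≠ p.2}) :
      (discrete {p.1.1, p.1.2}).d p.1.2 p.1.1 = 1 := discrete_d_of_ne _ p.2.symm
  refine continuous_of_dom_eq_range continuous_pair
    (fun p => (Matrix.range_cons_cons_empty p.1.1 p.1.2 _).symm) ?_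
  simp [Fin.forall_fin_two, discrete_d_self, d_left_right, d_right_left, continuous_const]

end PartialCPM

theorem stmt_13_general
    (X : Type*) [TopologicalSpace X] [T1Space X]
    (u : PartialCPM X → CPM X) (hu_cont : Continuous u)
    (hu_ext : ∀ (ρ : PartialCPM X) (x y : X), x ∈ ρ.dom → y ∈ ρ.dom →
      (u ρ).d x y = ρ.d x y) :
    ∃ Ψ : {p : X × X // p.1 ≠ p.2} → CPM X, Continuous Ψ ∧
      (∀ p : {p : X × X // p.1 ≠ p.2}, (Ψ p).d p.1.1 p.1.2 = 1) ∧
      (∀ p : {p : X × X // p.1 ≠ p.2}, ∃ v : PartialCPM X,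
        v.dom = {p.1.1, p.1.2} ∧ v.d p.1.1 p.1.2 = 1 ∧ Ψ p = u v) := by
  let v (p : {p : X × X // p.1 ≠ p.2}) : PartialCPM X := .discrete {p.1.1, p.1.2}
  have v_apply (p) : (v p).d p.1.1 p.1.2 = 1 := PartialCPM.discrete_d_of_ne _ p.2
  refine ⟨u ∘ v, hu_cont.comp PartialCPM.continuous_discrete_pair, fun p => ?_,
    fun p => ⟨v p, rfl, v_apply p, rfl⟩⟩
  calc (u (v p)).d p.1.1 p.1.2 = (v p).d p.1.1 p.1.2 :=
        hu_ext _ _ _ (mem_insert _ _) (mem_insert_of_mem _ rfl)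
    _ = 1 := v_apply p

theorem stmt_13
    (X : Type*) [TopologicalSpace X] [CompactSpace X] [T2Space X]
    -- u is a continuous extension operator PM → PM(X)
    (u : PartialCPM X → CPM X) (hu_cont : Continuous u)
    (hu_ext : ∀ (ρ : PartialCPM X) (x y : X), x ∈ ρ.dom → y ∈ ρ.dom →
      (u ρ).d x y = ρ.d x y) :
    -- there is a continuous map Ψ : (X × X) ∖ Δ_X → PM(X) with Ψ_{(x,y)}(x,y) = 1,
    -- namely Ψ_{(x,y)} = u(v_{(x,y)}) where v_{(x,y)} is the pseudometric on
    -- {x,y} with v_{(x,y)}(x,y) = 1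
    ∃ Ψ : {p : X × X // p.1 ≠ p.2} → CPM X, Continuous Ψ ∧
      (∀ p : {p : X × X // p.1 ≠ p.2}, (Ψ p).d p.1.1 p.1.2 = 1) ∧
      (∀ p : {p : X × X // p.1 ≠ p.2}, ∃ v : PartialCPM X,
        v.dom = {p.1.1, p.1.2} ∧ v.d p.1.1 p.1.2 = 1 ∧ Ψ p = u v) :=
  stmt_13_general X u hu_cont hu_ext

end
end
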